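/- Every continuous map T : [0,1] → [0,1] with zero topological entropy is Möbius orthogonal: for every continuous f : [0,1] → ℂ and every x ∈ [0,1], lim_{N→∞} (1/N) Σ_{n≤N} f(T^n x) μ(n) = 0. -/

import Mathlib

open Filter Topology unitInterval

/-!
If the entropy is zero, no iterate of `T` has a horseshoe. An orbit without a horseshoe that does
not converge must eventually alternate between the two sides of a fixed point. Applied to the
iterates `T^(2^k)`, this gives a dichotomy. Either the orbit is asymptotic to a periodic orbit, or
for every `k` its subsequences along the residue classes modulo `2 ^ k` eventually span disjoint
intervals. In the second case a continuous `f` has small oscillation along all but boundedly many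
of these classes, with a bound independent of `k`. So in both cases `f (T^n x)` is, up to a small
mean error, a periodic sequence. Finally, `μ` has mean zero against periodic sequences: this is the
prime number theorem in arithmetic progressions, here obtained from the nonvanishing of Dirichlet
`L`-functions on `re s = 1` through a Tauberian theorem.
-/

section LaplaceFourier

open MeasureTheory FourierTransform Real

variable {E : Type*} [NormedAddCommGroup E] [NormedSpace ℂ E] {g : ℝ → E} {C : ℝ} {G : ℂ → E}
  {ψ : ℝ → ℂ}

theorem fourier_exp_smul_eq_laplace
    (hgG : ∀ s : ℂ, 0 < s.re → ∫ u : ℝ, Complex.exp (-s * u) • g u = G s)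
    {δ : ℝ} (hδ : 0 < δ) (ξ : ℝ) :
    𝓕 (fun u : ℝ ↦ Complex.exp (-δ * u) • g u) ξ = G (δ + 2 * π * ξ * Complex.I) := by
  rw [fourier_real_eq_integral_exp_smul, ← hgG _ (by simpa using hδ)]
  refine integral_congr_ae (.of_forall fun u ↦ ?_)
  dsimp only
  rw [smul_smul, ← Complex.exp_add]
  congr 2
  push_cast
  ring

/-- A causal signal: a measurable function on the line, bounded by `C` and supported on `[0, ∞)`.
Its Laplace transform `∫ exp (-s u) g(u) du` is then an integral over the whole line, which makes
it a Fourier transform on each vertical line `re s = δ > 0`. -/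
structure IsBoundedCausal (g : ℝ → E) (C : ℝ) : Prop where
  aestronglyMeasurable : AEStronglyMeasurable g volume
  norm_le : ∀ u, ‖g u‖ ≤ C
  eq_zero_of_neg : ∀ u < 0, g u = 0

namespace IsBoundedCausal

theorem norm_exp_smul_le (hg : IsBoundedCausal g C) {δ : ℝ} (hδ : 0 ≤ δ) (u : ℝ) :
    ‖Complex.exp (-δ * u) • g u‖ ≤ C := by
  rcases lt_or_ge u 0 with hu | hu
  · simpa [hg.eq_zero_of_neg u hu] using (norm_nonneg _).trans (hg.norm_le u)
  · rw [norm_smul, Complex.norm_exp]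
    refine (mul_le_of_le_one_left (norm_nonneg _) ?_).trans (hg.norm_le u)
    simpa using mul_nonneg hδ hu

theorem aestronglyMeasurable_exp_smul (hg : IsBoundedCausal g C) (δ : ℝ) :
    AEStronglyMeasurable (fun u : ℝ ↦ Complex.exp (-δ * u) • g u) volume :=
  AEStronglyMeasurable.smul (by fun_prop) hg.aestronglyMeasurable

theorem integrable_exp_smul (hg : IsBoundedCausal g C) {δ : ℝ} (hδ : 0 < δ) :
    Integrable fun u : ℝ ↦ Complex.exp (-δ * u) • g u := by
  have hdom : Integrable ((Set.Ici (0 : ℝ)).indicator fun u ↦ rexp (-δ * u) * C) := by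
    rw [integrable_indicator_iff measurableSet_Ici, integrableOn_Ici_iff_integrableOn_Ioi]
    exact (exp_neg_integrableOn_Ioi 0 hδ).mul_const C
  refine hdom.mono' (hg.aestronglyMeasurable_exp_smul δ) (.of_forall fun u ↦ ?_)
  rcases lt_or_ge u 0 with hu | hu
  · simp [hg.eq_zero_of_neg u hu, hu]
  · rw [Set.indicator_of_mem (Set.mem_Ici.2 hu), norm_smul, Complex.norm_exp]
    simpa using mul_le_mul_of_nonneg_left (hg.norm_le u) (exp_nonneg (-δ * u))

theorem integral_smul_laplace_add_eq [CompleteSpace E] (hg : IsBoundedCausal g C)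
    (hgG : ∀ s : ℂ, 0 < s.re → ∫ u : ℝ, Complex.exp (-s * u) • g u = G s)
    (hψ : Integrable ψ) {δ : ℝ} (hδ : 0 < δ) :
    ∫ ξ : ℝ, ψ ξ • G (δ + 2 * π * ξ * Complex.I) =
      ∫ u : ℝ, 𝓕 ψ u • Complex.exp (-δ * u) • g u := by
  have parseval := VectorFourier.integral_fourierIntegral_smul_eq_flip (L := innerₗ ℝ)
    (μ := volume) (ν := volume) continuous_fourierChar continuous_inner hψ
    (hg.integrable_exp_smul hδ)
  rw [flip_innerₗ] at parseval
  simp only [← fourier_exp_smul_eq_laplace hgG hδ]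
  exact parseval.symm

theorem tendsto_integral_smul_exp_smul (hg : IsBoundedCausal g C) {k : ℝ → ℂ} (hk : Integrable k) :
    Tendsto (fun δ : ℝ ↦ ∫ u : ℝ, k u • Complex.exp (-δ * u) • g u) (𝓝[>] 0)
      (𝓝 (∫ u : ℝ, k u • g u)) := by
  refine tendsto_integral_filter_of_dominated_convergence (fun u ↦ ‖k u‖ * C)
    (.of_forall fun δ ↦ hk.1.smul (hg.aestronglyMeasurable_exp_smul δ)) ?_
    (hk.norm.mul_const C) (.of_forall fun u ↦ ?_)
  · filter_upwards [self_mem_nhdsWithin] with δ (hδ : 0 < δ)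
    refine .of_forall fun u ↦ ?_
    rw [norm_smul]
    exact mul_le_mul_of_nonneg_left (hg.norm_exp_smul_le hδ.le u) (norm_nonneg _)
  · have hcont : Continuous fun δ : ℝ ↦ k u • Complex.exp (-δ * u) • g u := by fun_prop
    simpa using (hcont.tendsto 0).mono_left nhdsWithin_le_nhds

end IsBoundedCausal

theorem tendsto_integral_smul_vertical_line (hG : ContinuousOn G {s | 0 ≤ s.re})
    (hψ : Continuous ψ) (hψc : HasCompactSupport ψ) :
    Tendsto (fun δ : ℝ ↦ ∫ ξ : ℝ, ψ ξ • G (δ + 2 * π * ξ * Complex.I)) (𝓝[>] 0)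
      (𝓝 (∫ ξ : ℝ, ψ ξ • G (2 * π * ξ * Complex.I))) := by
  let Φ : ℝ × ℝ → ℂ := fun p ↦ p.1 + 2 * π * p.2 * Complex.I
  have hGΦ : ContinuousOn (G ∘ Φ) {p | 0 ≤ p.1} :=
    hG.comp (by fun_prop) fun p hp ↦ by simpa [Φ] using hp
  obtain ⟨M, hM⟩ := ((isCompact_Icc (a := (0 : ℝ)) (b := 1)).prod hψc).exists_bound_of_continuousOn
    (hGΦ.mono fun p hp ↦ hp.1.1)
  refine tendsto_integral_filter_of_dominated_convergence (fun ξ ↦ ‖ψ ξ‖ * M) ?_ ?_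
    ((hψ.integrable_of_hasCompactSupport hψc).norm.mul_const M) (.of_forall fun ξ ↦ ?_)
  · filter_upwards [self_mem_nhdsWithin] with δ (hδ : 0 < δ)
    refine (hψ.smul ?_).aestronglyMeasurable
    exact hGΦ.comp_continuous (f := fun ξ : ℝ ↦ (δ, ξ)) (by fun_prop) fun _ ↦ hδ.le
  · filter_upwards [Ioc_mem_nhdsGT one_pos] with δ hδ
    refine .of_forall fun ξ ↦ ?_
    rw [norm_smul]
    by_cases hξ : ξ ∈ tsupport ψ
    · exact mul_le_mul_of_nonneg_left (hM (δ, ξ) ⟨⟨hδ.1.le, hδ.2⟩, hξ⟩) (norm_nonneg _)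
    · simp [image_eq_zero_of_notMem_tsupport hξ]
  · have hcont : ContinuousOn (fun δ : ℝ ↦ G (Φ (δ, ξ))) (Set.Ici 0) :=
      hGΦ.comp (by fun_prop) fun δ hδ ↦ hδ
    simpa [Φ] using ((hcont 0 Set.self_mem_Ici).mono_left
      (nhdsWithin_mono _ Set.Ioi_subset_Ici_self)).const_smul (ψ ξ)

theorem IsBoundedCausal.integral_fourier_smul_eq [CompleteSpace E] (hg : IsBoundedCausal g C)
    (hG : ContinuousOn G {s | 0 ≤ s.re})
    (hgG : ∀ s : ℂ, 0 < s.re → ∫ u : ℝ, Complex.exp (-s * u) • g u = G s)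
    (hψ : Continuous ψ) (hψc : HasCompactSupport ψ) (hψF : Integrable (𝓕 ψ)) :
    ∫ u : ℝ, 𝓕 ψ u • g u = ∫ ξ : ℝ, ψ ξ • G (2 * π * ξ * Complex.I) := by
  refine tendsto_nhds_unique (hg.tendsto_integral_smul_exp_smul hψF)
    ((tendsto_integral_smul_vertical_line hG hψ hψc).congr' ?_)
  filter_upwards [self_mem_nhdsWithin] with δ (hδ : 0 < δ)
  exact hg.integral_smul_laplace_add_eq hgG (hψ.integrable_of_hasCompactSupport hψc) hδ

theorem fourier_fourierChar_smul (ψ : ℝ → E) (v u : ℝ) :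
    𝓕 (fun ξ ↦ 𝐞 (v * ξ) • ψ ξ) u = 𝓕 ψ (u - v) := by
  simp only [fourier_real_eq, smul_smul, ← AddChar.map_add_eq_mul]
  congr! 4
  ring

theorem fourier_comp_mul_left (ψ : ℝ → E) {r : ℝ} (hr : 0 < r) (u : ℝ) :
    𝓕 (fun ξ ↦ ψ (r * ξ)) u = r⁻¹ • 𝓕 ψ (r⁻¹ * u) := by
  have := Measure.integral_comp_mul_left (fun ξ ↦ 𝐞 (-(ξ * (r⁻¹ * u))) • ψ ξ) r
  rw [abs_of_pos (inv_pos.2 hr)] at this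
  rw [fourier_real_eq, fourier_real_eq, ← this]
  congr! 5 with ξ
  field_simp

theorem IsBoundedCausal.tendsto_integral_fourier_smul_comp_add [CompleteSpace E]
    (hg : IsBoundedCausal g C) (hG : ContinuousOn G {s | 0 ≤ s.re})
    (hgG : ∀ s : ℂ, 0 < s.re → ∫ u : ℝ, Complex.exp (-s * u) • g u = G s)
    (hψ : Continuous ψ) (hψc : HasCompactSupport ψ) (hψF : Integrable (𝓕 ψ)) :
    Tendsto (fun v : ℝ ↦ ∫ w : ℝ, 𝓕 ψ w • g (v + w)) atTop (𝓝 0) := by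
  have hconv (v : ℝ) : ∫ w : ℝ, 𝓕 ψ w • g (v + w) =
      𝓕 (fun ξ : ℝ ↦ ψ ξ • G (2 * π * ξ * Complex.I)) (-v) := by
    have hmod : 𝓕 (fun ξ ↦ 𝐞 (v * ξ) • ψ ξ) = fun u ↦ 𝓕 ψ (u - v) :=
      funext (fourier_fourierChar_smul ψ v)
    calc ∫ w : ℝ, 𝓕 ψ w • g (v + w) = ∫ u : ℝ, 𝓕 ψ (u - v) • g u := by
          rw [← integral_add_left_eq_self (fun u ↦ 𝓕 ψ (u - v) • g u) v]
          simp only [add_sub_cancel_left]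
      _ = ∫ u : ℝ, 𝓕 (fun ξ ↦ 𝐞 (v * ξ) • ψ ξ) u • g u := by rw [hmod]
      _ = ∫ ξ : ℝ, (𝐞 (v * ξ) • ψ ξ) • G (2 * π * ξ * Complex.I) := by
          refine hg.integral_fourier_smul_eq hG hgG ?_ ?_ (hmod ▸ hψF.comp_sub_right v)
          · exact (continuous_fourierChar.comp (by fun_prop)).smul hψ
          · exact hψc.smul_left
      _ = 𝓕 (fun ξ : ℝ ↦ ψ ξ • G (2 * π * ξ * Complex.I)) (-v) := by
          rw [fourier_real_eq]
          congr! 2 with ξ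
          rw [smul_assoc, mul_neg, neg_neg, mul_comm]
  simp only [hconv]
  exact (zero_at_infty_fourier _).comp (tendsto_neg_atTop_atBot.mono_right atBot_le_cocompact)

end LaplaceFourier

section Tauberian

open MeasureTheory FourierTransform Real
open scoped SchwartzMap ContDiff

variable {F : Type*} [SeminormedAddCommGroup F] {C : ℝ}

/-- Schmidt's slow oscillation, the usual Tauberian condition: `g w - g v` is small when `v` is
large and `w` lies in a short interval to the right of `v`. -/
def SlowlyOscillating (g : ℝ → F) : Prop :=
  ∀ ε > 0, ∃ δ > 0, ∀ᶠ v in atTop, ∀ w, v ≤ w → w ≤ v + δ → ‖g w - g v‖ ≤ ε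

theorem SlowlyOscillating.eventually_norm_sub_le {g : ℝ → F} (hg : SlowlyOscillating g)
    (hgC : ∀ u, ‖g u‖ ≤ C) {ε : ℝ} (hε : 0 < ε) :
    ∃ D, ∀ᶠ v in atTop, ∀ h, ‖g v - g (v + h)‖ ≤ ε + D * |h| := by
  obtain ⟨δ, hδ, hosc⟩ := hg ε hε
  obtain ⟨V, hV⟩ := eventually_atTop.1 hosc
  have hC : 0 ≤ C := (norm_nonneg _).trans (hgC 0)
  refine ⟨2 * C / δ, ?_⟩
  filter_upwards [eventually_ge_atTop (V + δ)] with v hv h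
  have hD : 0 ≤ 2 * C / δ * |h| := by positivity
  rcases le_or_gt δ |h| with hδh | hδh
  · calc ‖g v - g (v + h)‖ ≤ C + C := norm_sub_le_of_le (hgC _) (hgC _)
      _ = 2 * C / δ * δ := by field_simp; ring
      _ ≤ 2 * C / δ * |h| := by gcongr
      _ ≤ ε + 2 * C / δ * |h| := by linarith
  · obtain ⟨hlo, hhi⟩ := abs_lt.1 hδh
    refine le_trans ?_ (le_add_of_nonneg_right hD)
    rcases le_total 0 h with h0 | h0
    · rw [norm_sub_rev]
      exact hV v (by linarith) _ (by linarith) (by linarith)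
    · exact hV (v + h) (by linarith) _ (by linarith) (by linarith)

variable {E : Type*} [NormedAddCommGroup E] [NormedSpace ℂ E] {g : ℝ → E} {G : ℂ → E}

theorem integral_fourier_schwartz (ψ : 𝓢(ℝ, ℂ)) : ∫ w, 𝓕 (ψ : ℝ → ℂ) w = ψ 0 := by
  have hinv := Continuous.fourierInv_fourier_eq ψ.continuous ψ.integrable
    (by simpa [SchwartzMap.fourier_coe] using (𝓕 ψ).integrable)
  simpa [fourierInv_eq'] using congrFun hinv 0

theorem integral_norm_fourier_comp_mul_left (ψ : ℝ → E) {r : ℝ} (hr : 0 < r) :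
    ∫ w, ‖𝓕 (fun ξ ↦ ψ (r * ξ)) w‖ = ∫ w, ‖𝓕 ψ w‖ := by
  simp only [fourier_comp_mul_left ψ hr, norm_smul, norm_inv, norm_of_nonneg hr.le]
  rw [integral_const_mul, Measure.integral_comp_mul_left fun w ↦ ‖𝓕 ψ w‖, inv_inv, abs_of_pos hr,
    smul_eq_mul, inv_mul_cancel_left₀ hr.ne']

theorem integral_abs_mul_norm_fourier_comp_mul_left (ψ : ℝ → E) {r : ℝ} (hr : 0 < r) :
    ∫ w, |w| * ‖𝓕 (fun ξ ↦ ψ (r * ξ)) w‖ = r * ∫ w, |w| * ‖𝓕 ψ w‖ := by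
  have hscale (w : ℝ) : |w| * ‖𝓕 (fun ξ ↦ ψ (r * ξ)) w‖ = |r⁻¹ * w| * ‖𝓕 ψ (r⁻¹ * w)‖ := by
    rw [fourier_comp_mul_left ψ hr, norm_smul, norm_inv, norm_of_nonneg hr.le, abs_mul, abs_inv,
      abs_of_pos hr]
    ring
  simp only [hscale]
  rw [Measure.integral_comp_mul_left fun w ↦ |w| * ‖𝓕 ψ w‖, inv_inv, abs_of_pos hr, smul_eq_mul]

theorem exists_fourier_approximate_identity :
    ∃ C₀ : ℝ, ∀ η > 0, ∃ ψ : 𝓢(ℝ, ℂ), HasCompactSupport ψ ∧ ∫ w, 𝓕 (ψ : ℝ → ℂ) w = 1 ∧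
      ∫ w, ‖𝓕 (ψ : ℝ → ℂ) w‖ ≤ C₀ ∧ ∫ w, |w| * ‖𝓕 (ψ : ℝ → ℂ) w‖ ≤ η := by
  obtain ⟨b⟩ : Nonempty (ContDiffBump (0 : ℝ)) := inferInstance
  let φ : ℝ → ℂ := fun ξ ↦ b ξ
  have hφ : ContDiff ℝ ∞ φ := Complex.ofRealCLM.contDiff.comp b.contDiff
  have hφc : HasCompactSupport φ := b.hasCompactSupport.comp_left Complex.ofReal_zero
  have hφ0 : φ 0 = 1 := by
    simp [φ, b.one_of_mem_closedBall (Metric.mem_closedBall_self b.rIn_pos.le)]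
  refine ⟨∫ w, ‖𝓕 φ w‖, fun η hη ↦ ?_⟩
  set C₁ := ∫ w, |w| * ‖𝓕 φ w‖
  have : 0 ≤ C₁ := integral_nonneg fun w ↦ by positivity
  have hr : 0 < η / (C₁ + 1) := by positivity
  have hψc : HasCompactSupport fun ξ ↦ φ (η / (C₁ + 1) * ξ) :=
    hφc.comp_homeomorph (Homeomorph.mulLeft₀ _ hr.ne')
  refine ⟨hψc.toSchwartzMap (hφ.comp (contDiff_const.mul contDiff_id)), hψc, ?_, ?_, ?_⟩
  · rw [integral_fourier_schwartz]
    simpa using hφ0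
  · exact (integral_norm_fourier_comp_mul_left φ hr).le
  · refine (integral_abs_mul_norm_fourier_comp_mul_left φ hr).trans_le ?_
    rw [div_mul_eq_mul_div, div_le_iff₀ (by positivity)]
    nlinarith

theorem norm_le_norm_integral_smul_comp_add [CompleteSpace E] (hgm : AEStronglyMeasurable g volume)
    (hgC : ∀ u, ‖g u‖ ≤ C) {K : ℝ → ℂ} (hK : Integrable K) (hKw : Integrable fun w ↦ |w| * ‖K w‖)
    (hK1 : ∫ w, K w = 1) {v ε D : ℝ} (hv : ∀ h, ‖g v - g (v + h)‖ ≤ ε + D * |h|) :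
    ‖g v‖ ≤ ‖∫ w, K w • g (v + w)‖ + (ε * ∫ w, ‖K w‖) + D * ∫ w, |w| * ‖K w‖ := by
  have hconv : Integrable fun w ↦ K w • g (v + w) :=
    hK.smul_bdd C (hgm.comp_quasiMeasurePreserving
      (measurePreserving_add_left volume v).quasiMeasurePreserving) (.of_forall fun w ↦ hgC _)
  have hdiff : g v - ∫ w, K w • g (v + w) = ∫ w, K w • (g v - g (v + w)) := by
    simp only [smul_sub]
    rw [integral_sub (hK.smul_const _) hconv, integral_smul_const, hK1, one_smul]
  have hbound : ‖∫ w, K w • (g v - g (v + w))‖ ≤ (ε * ∫ w, ‖K w‖) + D * ∫ w, |w| * ‖K w‖ := by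
    rw [← integral_const_mul, ← integral_const_mul,
      ← integral_add (hK.norm.const_mul _) (hKw.const_mul _)]
    refine norm_integral_le_of_norm_le ((hK.norm.const_mul _).add (hKw.const_mul _))
      (.of_forall fun w ↦ ?_)
    rw [norm_smul, ← mul_assoc, ← add_mul, mul_comm]
    exact mul_le_mul_of_nonneg_right (hv w) (norm_nonneg _)
  rw [add_assoc]
  exact (norm_le_norm_add_norm_sub' _ _).trans (by rw [hdiff]; gcongr)

/-- Convolving `g` with a kernel whose Fourier transform has compact support only sees the Laplace
transform on a compact piece of the line `re s = 0`, and there the Riemann–Lebesgue lemma applies;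
slow oscillation makes `g` close to its convolution with a concentrated kernel. -/
theorem IsBoundedCausal.tendsto_zero_of_laplace [CompleteSpace E] (hg : IsBoundedCausal g C)
    (hosc : SlowlyOscillating g) (hG : ContinuousOn G {s | 0 ≤ s.re})
    (hgG : ∀ s : ℂ, 0 < s.re → ∫ u : ℝ, Complex.exp (-s * u) • g u = G s) :
    Tendsto g atTop (𝓝 0) := by
  obtain ⟨C₀, hC₀⟩ := exists_fourier_approximate_identity
  have hC₀_nonneg : 0 ≤ C₀ := by
    obtain ⟨ψ, -, -, hψ, -⟩ := hC₀ 1 one_pos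
    exact (integral_nonneg fun w ↦ norm_nonneg _).trans hψ
  refine NormedAddGroup.tendsto_nhds_zero.2 fun ε hε ↦ ?_
  obtain ⟨D, hD⟩ := hosc.eventually_norm_sub_le hg.norm_le (ε := ε / (4 * (C₀ + 1))) (by positivity)
  obtain ⟨ψ, hψc, hψ1, hψ0, hψw⟩ := hC₀ (ε / (4 * (|D| + 1))) (by positivity)
  have hF : 𝓕 (ψ : ℝ → ℂ) = (𝓕 ψ : 𝓢(ℝ, ℂ)) := (SchwartzMap.fourier_coe ψ).symm
  have hFint : Integrable (𝓕 (ψ : ℝ → ℂ)) := hF ▸ (𝓕 ψ).integrable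
  have hFw : Integrable fun w ↦ |w| * ‖𝓕 (ψ : ℝ → ℂ) w‖ :=
    ((𝓕 ψ : 𝓢(ℝ, ℂ)).integrable_pow_mul volume 1).congr (.of_forall fun w ↦ by simp [hF])
  have hRL := hg.tendsto_integral_fourier_smul_comp_add hG hgG ψ.continuous hψc hFint
  filter_upwards [hD, NormedAddGroup.tendsto_nhds_zero.1 hRL (ε / 2) (by positivity)]
    with v hv hconv
  have h₀ : ε / (4 * (C₀ + 1)) * ∫ w, ‖𝓕 (ψ : ℝ → ℂ) w‖ ≤ ε / 4 := by
    refine (mul_le_mul_of_nonneg_left hψ0 (by positivity)).trans ?_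
    rw [div_mul_eq_mul_div, div_le_div_iff₀ (by positivity) (by positivity)]
    nlinarith
  have h₁ : D * ∫ w, |w| * ‖𝓕 (ψ : ℝ → ℂ) w‖ ≤ ε / 4 := by
    refine (mul_le_mul (le_abs_self D) hψw (by positivity) (abs_nonneg D)).trans ?_
    rw [mul_div_assoc', div_le_div_iff₀ (by positivity) (by positivity)]
    nlinarith [abs_nonneg D]
  linarith [norm_le_norm_integral_smul_comp_add hg.aestronglyMeasurable hg.norm_le hFint hFw hψ1 hv]

end Tauberian

section MeanZero

variable {E F : Type*} [SeminormedAddCommGroup E] [NormedSpace ℝ E] [SeminormedAddCommGroup F]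
  [NormedSpace ℝ F]

/-- The sequence `a` has Cesàro mean zero; the summation starts at `n = 1`, as is usual for
arithmetic functions. -/
def HasMeanZero (a : ℕ → E) : Prop :=
  Tendsto (fun N : ℕ ↦ (N : ℝ)⁻¹ • ∑ n ∈ Finset.Icc 1 N, a n) atTop (𝓝 0)

theorem HasMeanZero.congr {a b : ℕ → E} (ha : HasMeanZero a) (h : ∀ n, a n = b n) :
    HasMeanZero b :=
  funext h ▸ ha

theorem HasMeanZero.map {a : ℕ → E} (ha : HasMeanZero a) (L : E →L[ℝ] F) :
    HasMeanZero fun n ↦ L (a n) := by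
  have := (L.continuous.tendsto 0).comp ha
  simpa [HasMeanZero, Function.comp_def] using this

theorem HasMeanZero.sum {ι : Type*} (s : Finset ι) {a : ι → ℕ → E}
    (ha : ∀ i ∈ s, HasMeanZero (a i)) : HasMeanZero fun n ↦ ∑ i ∈ s, a i n := by
  have := tendsto_finsetSum s ha
  simpa [HasMeanZero, Finset.sum_comm (s := s), Finset.smul_sum] using this

theorem sum_Icc_ite_dvd {A : Type*} [AddCommMonoid A] {d : ℕ} (hd : 0 < d) (b : ℕ → A) (N : ℕ) :
    ∑ n ∈ Finset.Icc 1 N, (if d ∣ n then b (n / d) else 0) = ∑ m ∈ Finset.Icc 1 (N / d), b m := by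
  rw [← Finset.sum_filter]
  refine Finset.sum_bij' (fun n _ ↦ n / d) (fun m _ ↦ d * m) ?_ ?_ ?_ ?_ fun _ _ ↦ rfl
  · intro n hn
    obtain ⟨hn, hdn⟩ := Finset.mem_filter.1 hn
    obtain ⟨h1, hN⟩ := Finset.mem_Icc.1 hn
    exact Finset.mem_Icc.2 ⟨Nat.div_pos (Nat.le_of_dvd h1 hdn) hd, Nat.div_le_div_right hN⟩
  · intro m hm
    obtain ⟨h1, hN⟩ := Finset.mem_Icc.1 hm
    refine Finset.mem_filter.2 ⟨Finset.mem_Icc.2 ⟨Nat.mul_pos hd h1, ?_⟩, dvd_mul_right d m⟩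
    exact (Nat.mul_le_mul_left d hN).trans (Nat.mul_div_le N d)
  · exact fun n hn ↦ Nat.mul_div_cancel' (Finset.mem_filter.1 hn).2
  · exact fun m _ ↦ Nat.mul_div_cancel_left m hd

theorem HasMeanZero.comp_dvd {b : ℕ → E} (hb : HasMeanZero b) (d : ℕ) :
    HasMeanZero fun n ↦ if d ∣ n then b (n / d) else 0 := by
  rcases Nat.eq_zero_or_pos d with rfl | hd
  · refine tendsto_const_nhds.congr fun N ↦ ?_
    rw [Finset.sum_eq_zero, smul_zero]
    intro n hn
    simp [Nat.one_le_iff_ne_zero.1 (Finset.mem_Icc.1 hn).1]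
  refine squeeze_zero_norm (fun N ↦ ?_)
    (tendsto_zero_iff_norm_tendsto_zero.1 (hb.comp (Nat.tendsto_div_const_atTop hd.ne')))
  rw [sum_Icc_ite_dvd hd, norm_smul, Function.comp_apply, norm_smul, norm_inv, norm_inv,
    RCLike.norm_natCast, RCLike.norm_natCast]
  rcases Nat.eq_zero_or_pos (N / d) with h0 | hpos
  · simp [h0]
  · gcongr
    exact Nat.div_le_self N d

end MeanZero

section LSeries

open MeasureTheory Real

variable {a : ℕ → ℂ} {C : ℝ}

theorem norm_sum_Icc_one_le (ha : ∀ n, ‖a n‖ ≤ C) (N : ℕ) :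
    ‖∑ k ∈ Finset.Icc 1 N, a k‖ ≤ C * N := by
  simpa [mul_comm] using norm_sum_le_of_le (Finset.Icc 1 N) fun k _ ↦ ha k

theorem norm_sum_Icc_one_sub_le (ha : ∀ n, ‖a n‖ ≤ C) {M N : ℕ} (hMN : M ≤ N) :
    ‖∑ k ∈ Finset.Icc 1 N, a k - ∑ k ∈ Finset.Icc 1 M, a k‖ ≤ C * (N - M) := by
  have hdiff : ∑ k ∈ Finset.Icc 1 N, a k - ∑ k ∈ Finset.Icc 1 M, a k = ∑ k ∈ Finset.Ioc M N, a k :=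
    sub_eq_of_eq_add' (Finset.sum_Ioc_consecutive a M.zero_le hMN).symm
  rw [hdiff, ← Nat.cast_sub hMN]
  simpa [mul_comm] using norm_sum_le_of_le (Finset.Ioc M N) fun k _ ↦ ha k

/-- The averages of `a` on an exponential scale, `u ↦ e⁻ᵘ ∑_{k ≤ eᵘ} a k`; the sum is empty for
`u < 0`. The Laplace transform at `s` is `L(a, 1 + s) / (1 + s)`. -/
noncomputable def expMean (a : ℕ → ℂ) (u : ℝ) : ℂ :=
  rexp (-u) • ∑ k ∈ Finset.Icc 1 ⌊rexp u⌋₊, a k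

theorem expMean_of_neg (a : ℕ → ℂ) {u : ℝ} (hu : u < 0) : expMean a u = 0 := by
  simp [expMean, Nat.floor_eq_zero.2 (exp_lt_one_iff.2 hu)]

theorem isBoundedCausal_expMean (ha : ∀ n, ‖a n‖ ≤ C) : IsBoundedCausal (expMean a) C where
  aestronglyMeasurable := by
    have hA : Measurable fun u : ℝ ↦ ∑ k ∈ Finset.Icc 1 ⌊rexp u⌋₊, a k :=
      (measurable_from_nat (f := fun N : ℕ ↦ ∑ k ∈ Finset.Icc 1 N, a k)).comp
        (Nat.measurable_floor.comp measurable_exp)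
    exact (measurable_exp.comp measurable_neg |>.smul hA).aestronglyMeasurable
  norm_le u := by
    have hC : 0 ≤ C := (norm_nonneg _).trans (ha 0)
    rw [expMean, norm_smul, norm_of_nonneg (exp_pos _).le]
    calc rexp (-u) * ‖∑ k ∈ Finset.Icc 1 ⌊rexp u⌋₊, a k‖ ≤ rexp (-u) * (C * rexp u) := by
          gcongr
          exact (norm_sum_Icc_one_le ha _).trans (by gcongr; exact Nat.floor_le (exp_pos u).le)
      _ = C := by rw [mul_left_comm, ← exp_add, neg_add_cancel, exp_zero, mul_one]
  eq_zero_of_neg _ := expMean_of_neg a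

theorem norm_expMean_sub_le (ha : ∀ n, ‖a n‖ ≤ C) {v w : ℝ} (hvw : v ≤ w) :
    ‖expMean a w - expMean a v‖ ≤ C * (2 * (w - v) + rexp (-v)) := by
  have hC : 0 ≤ C := (norm_nonneg _).trans (ha 0)
  set A : ℝ → ℂ := fun u ↦ ∑ k ∈ Finset.Icc 1 ⌊rexp u⌋₊, a k
  have hdecomp : expMean a w - expMean a v =
      rexp (-w) • (A w - A v) - (rexp (-v) - rexp (-w)) • A v := by
    simp only [expMean, A]
    module
  have hexp : rexp (-w) ≤ rexp (-v) := exp_le_exp.2 (neg_le_neg hvw)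
  have hA : ‖A v‖ ≤ C * rexp v :=
    (norm_sum_Icc_one_le ha _).trans (by gcongr; exact Nat.floor_le (exp_pos v).le)
  have hAA : ‖A w - A v‖ ≤ C * (rexp w - rexp v + 1) := by
    refine (norm_sum_Icc_one_sub_le ha (Nat.floor_mono (exp_le_exp.2 hvw))).trans ?_
    gcongr
    linarith [Nat.floor_le (exp_pos w).le, Nat.lt_floor_add_one (rexp v)]
  have hconvex : 1 - rexp (v - w) ≤ w - v := by linarith [add_one_le_exp (v - w)]
  calc ‖expMean a w - expMean a v‖
      ≤ rexp (-w) * (C * (rexp w - rexp v + 1)) + (rexp (-v) - rexp (-w)) * (C * rexp v) := by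
        rw [hdecomp]
        refine norm_sub_le_of_le ?_ ?_ <;> rw [norm_smul, norm_of_nonneg]
        · gcongr
        · positivity
        · gcongr
        · linarith
    _ = C * (2 * (1 - rexp (v - w)) + rexp (-w)) := by
        rw [exp_sub, exp_neg, exp_neg]
        field_simp
        ring
    _ ≤ C * (2 * (w - v) + rexp (-v)) := by gcongr

theorem slowlyOscillating_expMean (ha : ∀ n, ‖a n‖ ≤ C) : SlowlyOscillating (expMean a) := by
  have hC : 0 ≤ C := (norm_nonneg _).trans (ha 0)
  intro ε hε
  refine ⟨ε / (4 * (C + 1)), by positivity, ?_⟩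
  have hexp : Tendsto (fun v ↦ C * rexp (-v)) atTop (𝓝 0) := by
    simpa using tendsto_exp_neg_atTop_nhds_zero.const_mul C
  filter_upwards [hexp.eventually_le_const (half_pos hε)] with v hv w hvw hwv
  have : C * (2 * (w - v)) ≤ C * (2 * (ε / (4 * (C + 1)))) := by gcongr; linarith
  have : C * (2 * (ε / (4 * (C + 1)))) ≤ ε / 2 := by
    field_simp
    nlinarith
  linarith [norm_expMean_sub_le ha hvw]

theorem integral_exp_smul_expMean (ha : ∀ n, ‖a n‖ ≤ C) {s : ℂ} (hs : 0 < s.re) :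
    ∫ u : ℝ, Complex.exp (-s * u) • expMean a u = LSeries a (1 + s) / (1 + s) := by
  have hs1 : 1 < (1 + s).re := by simpa using hs
  have hbigO : (fun n : ℕ ↦ ∑ k ∈ Finset.Icc 1 n, ‖a k‖) =O[atTop] fun n : ℕ ↦ (n : ℝ) ^ (1 : ℝ) :=
    .of_bound C (.of_forall fun n ↦ by
      rw [norm_of_nonneg (by positivity)]
      simpa [mul_comm] using Finset.sum_le_sum fun k (_ : k ∈ Finset.Icc 1 n) ↦ ha k)
  have hintegrand (u : ℝ) : Complex.exp (-s * u) • expMean a u =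
      |rexp u| • ((∑ k ∈ Finset.Icc 1 ⌊rexp u⌋₊, a k) * (rexp u : ℂ) ^ (-(1 + s + 1))) := by
    have hpow : (rexp u : ℂ) ^ (-(1 + s + 1)) = Complex.exp (-(1 + s + 1) * u) := by
      rw [Complex.cpow_def_of_ne_zero (by simp),
        ← Complex.ofReal_log (exp_pos u).le, log_exp, mul_comm]
    have hexp : Complex.exp (-s * u) * Complex.exp (-u) =
        Complex.exp u * Complex.exp (-(1 + s + 1) * u) := by
      simp only [← Complex.exp_add]
      ring_nf
    rw [hpow, abs_of_pos (exp_pos u), expMean, smul_eq_mul, Complex.real_smul, Complex.real_smul]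
    push_cast
    linear_combination (∑ k ∈ Finset.Icc 1 ⌊rexp u⌋₊, a k) * hexp
  rw [eq_div_iff (Complex.ne_zero_of_re_pos (zero_lt_one.trans hs1)), mul_comm,
    LSeries_eq_mul_integral' a zero_le_one hs1 hbigO, ← exp_zero, ← image_exp_Ioi,
    integral_image_eq_integral_abs_deriv_smul measurableSet_Ioi
      (fun x _ ↦ (hasDerivAt_exp x).hasDerivWithinAt) exp_injective.injOn,
    ← integral_Ici_eq_integral_Ioi]
  simp only [← hintegrand]
  rw [setIntegral_eq_integral_of_forall_compl_eq_zero]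
  intro u hu
  rw [expMean_of_neg a (by simpa using hu), smul_zero]

/-- The Wiener–Ikehara theorem, for bounded coefficients and without a pole at `s = 1`. -/
theorem hasMeanZero_of_LSeries_eq (ha : ∀ n, ‖a n‖ ≤ C) {H : ℂ → ℂ}
    (hH : ContinuousOn H {s | 1 ≤ s.re}) (hL : ∀ s : ℂ, 1 < s.re → LSeries a s = H s) :
    HasMeanZero a := by
  have hne (s : ℂ) (hs : 0 ≤ s.re) : 1 + s ≠ 0 :=
    Complex.ne_zero_of_re_pos (by simpa using by linarith)
  have hlim : Tendsto (expMean a) atTop (𝓝 0) := by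
    refine (isBoundedCausal_expMean ha).tendsto_zero_of_laplace (slowlyOscillating_expMean ha)
      (G := fun s ↦ H (1 + s) / (1 + s)) ?_ fun s hs ↦ ?_
    · exact (hH.comp (by fun_prop) fun s hs ↦ by simpa using hs).div (by fun_prop) hne
    · rw [integral_exp_smul_expMean ha hs, hL _ (by simpa using hs)]
  refine (hlim.comp (tendsto_log_atTop.comp tendsto_natCast_atTop_atTop)).congr' ?_
  filter_upwards [eventually_gt_atTop 0] with N hN
  have hN' : (0 : ℝ) < N := by exact_mod_cast hN
  simp [expMean, exp_neg, exp_log hN']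

end LSeries

section Moebius

open ArithmeticFunction (moebius isMultiplicative_moebius moebius_eq_zero_of_not_squarefree)
open DirichletCharacter

variable {q : ℕ} {E : Type*} [SeminormedAddCommGroup E] [NormedSpace ℝ E]

theorem norm_dirichletCharacter_mul_moebius_le (χ : DirichletCharacter ℂ q) (n : ℕ) :
    ‖χ n * (moebius n : ℂ)‖ ≤ 1 := by
  rw [norm_mul, Complex.norm_intCast]
  exact mul_le_one₀ (χ.norm_le_one _) (abs_nonneg _)
    (by exact_mod_cast ArithmeticFunction.abs_moebius_le_one)

variable [NeZero q]

theorem LSeries_dirichletCharacter_mul_moebius (χ : DirichletCharacter ℂ q) {s : ℂ}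
    (hs : 1 < s.re) : LSeries (fun n ↦ χ n * (moebius n : ℂ)) s = (LFunction χ s)⁻¹ := by
  rw [LFunction_eq_LSeries χ hs]
  exact eq_inv_of_mul_eq_one_right (LSeries.mul_mu_eq_one χ hs)

theorem LFunctionTrivChar₁_ne_zero {s : ℂ} (hs : 1 ≤ s.re) : LFunctionTrivChar₁ q s ≠ 0 := by
  rcases eq_or_ne s 1 with rfl | h1
  · exact LFunctionTrivChar₁_apply_one_ne_zero q
  · rw [LFunctionTrivChar₁, Function.update_of_ne h1]
    exact mul_ne_zero (sub_ne_zero.2 h1) (LFunction_ne_zero_of_one_le_re _ (.inr h1) hs)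

theorem hasMeanZero_dirichletCharacter_mul_moebius (χ : DirichletCharacter ℂ q) :
    HasMeanZero fun n ↦ χ n * (moebius n : ℂ) := by
  by_cases hχ : χ = 1
  · subst hχ
    refine hasMeanZero_of_LSeries_eq (norm_dirichletCharacter_mul_moebius_le 1)
      (H := fun s ↦ (s - 1) / LFunctionTrivChar₁ q s) ?_ fun s hs ↦ ?_
    · exact ContinuousOn.div (by fun_prop)
        (differentiable_LFunctionTrivChar₁ q).continuous.continuousOn
        fun s hs ↦ LFunctionTrivChar₁_ne_zero hs
    · have h1 : s ≠ 1 := by rintro rfl; simp at hs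
      rw [LSeries_dirichletCharacter_mul_moebius 1 hs, LFunctionTrivChar₁,
        Function.update_of_ne h1, div_mul_eq_div_div, div_self (sub_ne_zero.2 h1), one_div]
  · refine hasMeanZero_of_LSeries_eq (norm_dirichletCharacter_mul_moebius_le χ)
      (ContinuousOn.inv₀ (differentiable_LFunction hχ).continuous.continuousOn fun s hs ↦ ?_)
      fun s hs ↦ LSeries_dirichletCharacter_mul_moebius χ hs
    exact LFunction_ne_zero_of_one_le_re χ (.inl hχ) hs

theorem hasMeanZero_moebius_of_eq_isUnit {a : ZMod q} (ha : IsUnit a) :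
    HasMeanZero fun n ↦ if a = n then (moebius n : ℝ) else 0 := by
  have hsum := HasMeanZero.sum Finset.univ fun (χ : DirichletCharacter ℂ q) _ ↦
    (hasMeanZero_dirichletCharacter_mul_moebius χ).map
      (((q.totient : ℂ)⁻¹ * χ a⁻¹) • ContinuousLinearMap.id ℝ ℂ)
  have htot : (q.totient : ℂ) ≠ 0 := by
    exact_mod_cast (Nat.totient_pos.2 (NeZero.pos q)).ne'
  refine (hsum.map Complex.reCLM).congr fun n ↦ ?_
  have horth := sum_char_inv_mul_char_eq ℂ ha (n : ZMod q)
  have : ∑ χ : DirichletCharacter ℂ q, (q.totient : ℂ)⁻¹ * χ a⁻¹ * (χ n * (moebius n : ℂ)) =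
      (q.totient : ℂ)⁻¹ * (moebius n : ℂ) * ∑ χ : DirichletCharacter ℂ q, χ a⁻¹ * χ n := by
    rw [Finset.mul_sum]
    exact Finset.sum_congr rfl fun χ _ ↦ by ring
  simp only [smul_apply, ContinuousLinearMap.id_apply, smul_eq_mul, this, horth]
  split_ifs
  · rw [mul_right_comm, inv_mul_cancel₀ htot, one_mul]
    simp
  · simp

theorem hasMeanZero_moebius_smul_of_coprime (c : ZMod q → E) :
    HasMeanZero fun n ↦ if n.Coprime q then moebius n • c n else 0 := by
  have hsum := HasMeanZero.sum (Finset.univ.filter fun a : ZMod q ↦ IsUnit a) fun a ha ↦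
    (hasMeanZero_moebius_of_eq_isUnit (Finset.mem_filter.1 ha).2).map
      (ContinuousLinearMap.toSpanSingleton ℝ (c a))
  refine hsum.congr fun n ↦ ?_
  simp [ite_smul, Finset.sum_ite_eq', ZMod.isUnit_iff_coprime, Int.cast_smul_eq_zsmul]

/-- For squarefree `n` only `d = gcd n q` contributes, and then `n / d` is prime to `q`. -/
theorem moebius_eq_sum_divisors (q n : ℕ) [NeZero q] :
    moebius n = ∑ d ∈ q.divisors, if d ∣ n then
      if (n / d).Coprime q then moebius (n / d) * moebius d else 0 else 0 := by
  rw [Finset.sum_eq_single_of_mem (n.gcd q)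
    (Nat.mem_divisors.2 ⟨Nat.gcd_dvd_right n q, NeZero.ne q⟩), if_pos (Nat.gcd_dvd_left n q)]
  · have hn : n / n.gcd q * n.gcd q = n := Nat.div_mul_cancel (Nat.gcd_dvd_left n q)
    split_ifs with hcop
    · rw [← isMultiplicative_moebius.map_mul_of_coprime
        (hcop.coprime_dvd_right (Nat.gcd_dvd_right n q)), hn]
    · exact moebius_eq_zero_of_not_squarefree fun hsq ↦
        hcop (Nat.coprime_div_gcd_of_squarefree hsq (NeZero.ne q))
  · intro d hd hne
    rw [Nat.mem_divisors] at hd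
    split_ifs with hdn hcop
    · refine absurd ?_ hne
      obtain ⟨m, rfl⟩ := hdn
      rw [Nat.mul_div_cancel_left m (Nat.pos_of_dvd_of_pos hd.1 (NeZero.pos q))] at hcop
      rw [hcop.gcd_mul_right_cancel, Nat.gcd_eq_left hd.1]
    · rfl
    · rfl

theorem hasMeanZero_moebius_smul_zmod (c : ZMod q → E) :
    HasMeanZero fun n ↦ moebius n • c n := by
  have hsum := HasMeanZero.sum q.divisors fun d _ ↦
    (hasMeanZero_moebius_smul_of_coprime fun r : ZMod q ↦ moebius d • c (d * r)).comp_dvd d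
  refine hsum.congr fun n ↦ ?_
  rw [moebius_eq_sum_divisors q n, Finset.sum_smul]
  refine Finset.sum_congr rfl fun d _ ↦ ?_
  split_ifs with hdn hcop
  · rw [mul_smul, ← Nat.cast_mul, Nat.mul_div_cancel' hdn]
  all_goals rw [zero_smul]

end Moebius

section RationallyAlmostPeriodic

open ArithmeticFunction

variable {E : Type*} [SeminormedAddCommGroup E]

/-- Besicovitch rational almost periodicity: up to arbitrarily small upper mean distance, the
sequence is periodic. Periodic sequences are encoded as functions on `ZMod q`. -/
def RationallyAlmostPeriodic (a : ℕ → E) : Prop :=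
  ∀ ε : ℝ, 0 < ε → ∃ q : ℕ, q ≠ 0 ∧ ∃ c : ZMod q → E,
    ∀ᶠ N : ℕ in atTop, ∑ n ∈ Finset.Icc 1 N, ‖a n - c n‖ ≤ ε * N

theorem norm_moebius_smul_le (n : ℕ) (v : E) : ‖moebius n • v‖ ≤ ‖v‖ := by
  have hμ : ‖moebius n‖ ≤ 1 := by
    rw [Int.norm_eq_abs]
    exact_mod_cast abs_moebius_le_one (n := n)
  exact (norm_zsmul_le _ _).trans (mul_le_of_le_one_left (norm_nonneg v) hμ)

theorem RationallyAlmostPeriodic.hasMeanZero_moebius_smul [NormedSpace ℝ E] {a : ℕ → E}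
    (ha : RationallyAlmostPeriodic a) : HasMeanZero fun n ↦ moebius n • a n := by
  refine NormedAddGroup.tendsto_nhds_zero.2 fun ε hε ↦ ?_
  obtain ⟨q, hq, c, hc⟩ := ha (ε / 2) (half_pos hε)
  have : NeZero q := ⟨hq⟩
  have hper := NormedAddGroup.tendsto_nhds_zero.1 (hasMeanZero_moebius_smul_zmod c) _ (half_pos hε)
  filter_upwards [hc, hper, eventually_gt_atTop 0] with N hN hNper hN0
  have hN0' : (0 : ℝ) < N := Nat.cast_pos.2 hN0
  have hsplit : ∑ n ∈ Finset.Icc 1 N, moebius n • a n =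
      ∑ n ∈ Finset.Icc 1 N, moebius n • (a n - c n) + ∑ n ∈ Finset.Icc 1 N, moebius n • c n := by
    simp_rw [← Finset.sum_add_distrib, ← smul_add, sub_add_cancel]
  have herr : ‖(N : ℝ)⁻¹ • ∑ n ∈ Finset.Icc 1 N, moebius n • (a n - c n)‖ ≤ ε / 2 := by
    rw [norm_smul, norm_inv, Real.norm_natCast, inv_mul_le_iff₀ hN0', mul_comm]
    exact (norm_sum_le_of_le _ fun n _ ↦ norm_moebius_smul_le n _).trans hN
  calc ‖(N : ℝ)⁻¹ • ∑ n ∈ Finset.Icc 1 N, moebius n • a n‖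
    _ ≤ ε / 2 + ‖(N : ℝ)⁻¹ • ∑ n ∈ Finset.Icc 1 N, moebius n • c n‖ := by
      rw [hsplit, smul_add]
      exact (norm_add_le _ _).trans (add_le_add_left herr _)
    _ < ε := by linarith

theorem card_filter_natCast_mem_le {q : ℕ} [NeZero q] (B : Finset (ZMod q)) (N : ℕ) :
    ((Finset.Icc 1 N).filter fun n : ℕ ↦ (n : ZMod q) ∈ B).card ≤ (N / q + 1) * B.card := by
  refine Finset.card_le_mul_card_image_of_maps_to (f := fun n : ℕ ↦ (n : ZMod q))
    (fun n hn ↦ (Finset.mem_filter.1 hn).2) _ fun r _ ↦ ?_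
  have hsub : (((Finset.Icc 1 N).filter fun n : ℕ ↦ (n : ZMod q) ∈ B).filter
      fun n : ℕ ↦ (n : ZMod q) = r) ⊆ (Finset.Ioc 0 N).filter (· ≡ r.val [MOD q]) := by
    intro n hn
    simp only [Finset.mem_filter, Finset.mem_Icc] at hn
    refine Finset.mem_filter.2 ⟨Finset.mem_Ioc.2 hn.1.1, ?_⟩
    rw [← ZMod.natCast_eq_natCast_iff, ZMod.natCast_zmod_val, hn.2]
  refine (Finset.card_le_card hsub).trans ?_
  rw [← Nat.cast_le (α := ℤ), Nat.Ioc_filter_modEq_card _ _ (NeZero.pos q)]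
  refine max_le ?_ (by positivity)
  have hfloor : ⌊((N : ℚ) - r.val) / q⌋ ≤ ⌊((N : ℕ) : ℚ) / q⌋ := by
    gcongr
    exact sub_le_self _ (Nat.cast_nonneg _)
  have hneg : -1 ≤ ⌊(((0 : ℕ) : ℚ) - r.val) / q⌋ := by
    rw [Int.le_floor, le_div_iff₀ (Nat.cast_pos.2 (NeZero.pos q))]
    have := Nat.cast_le (α := ℚ).2 r.val_lt.le
    push_cast
    linarith
  rw [Rat.floor_natCast_div_natCast] at hfloor
  push_cast at hfloor hneg ⊢
  linarith

theorem card_filter_natCast_mem_le_add {q : ℕ} [NeZero q] {B : Finset (ZMod q)} {ε : ℝ}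
    (hB : (B.card : ℝ) ≤ ε * q) (N : ℕ) :
    (((Finset.Icc 1 N).filter fun n : ℕ ↦ (n : ZMod q) ∈ B).card : ℝ) ≤ B.card + ε * N := by
  have hq : (0 : ℝ) < q := Nat.cast_pos.2 (NeZero.pos q)
  calc (((Finset.Icc 1 N).filter fun n : ℕ ↦ (n : ZMod q) ∈ B).card : ℝ)
    _ ≤ ((N / q : ℕ) + 1) * B.card := mod_cast card_filter_natCast_mem_le B N
    _ ≤ (N / q + 1) * B.card := by gcongr; exact Nat.cast_div_le
    _ = B.card + N / q * B.card := by ring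
    _ ≤ B.card + N / q * (ε * q) := by gcongr
    _ = B.card + ε * N := by field_simp

theorem norm_sub_le_add_ite {a : ℕ → E} {D ε : ℝ} (hD : ∀ n m, ‖a n - a m‖ ≤ D) (hε : 0 ≤ ε)
    {q M : ℕ} [NeZero q] {B : Finset (ZMod q)}
    (hdist : ∀ n ≥ M, ∀ m ≥ M, (n : ZMod q) = m → (n : ZMod q) ∉ B → dist (a n) (a m) ≤ ε) (n : ℕ) :
    ‖a n - a (q * M + (n : ZMod q).val)‖ ≤
      ε + ((if n < M then D else 0) + if (n : ZMod q) ∈ B then D else 0) := by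
  have hD0 : 0 ≤ D := (norm_nonneg _).trans (hD 0 0)
  have hnD := hD n (q * M + (n : ZMod q).val)
  by_cases hn : n < M
  · rw [if_pos hn]
    split_ifs <;> linarith
  by_cases hnB : (n : ZMod q) ∈ B
  · rw [if_neg hn, if_pos hnB]
    linarith
  · rw [if_neg hn, if_neg hnB, add_zero, add_zero, ← dist_eq_norm]
    exact hdist n (not_lt.1 hn) _ (Nat.le_add_right_of_le
      (Nat.le_mul_of_pos_left M (NeZero.pos q))) (by simp) hnB

theorem RationallyAlmostPeriodic.of_dist_le {a : ℕ → E} (ha : Bornology.IsBounded (Set.range a))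
    (h : ∀ ε : ℝ, 0 < ε → ∃ q : ℕ, q ≠ 0 ∧ ∃ (M : ℕ) (B : Finset (ZMod q)),
      (B.card : ℝ) ≤ ε * q ∧ ∀ n ≥ M, ∀ m ≥ M, (n : ZMod q) = m → (n : ZMod q) ∉ B →
        dist (a n) (a m) ≤ ε) :
    RationallyAlmostPeriodic a := by
  obtain ⟨D, hD⟩ := Metric.isBounded_iff.1 ha
  replace hD (n m : ℕ) : ‖a n - a m‖ ≤ D :=
    dist_eq_norm (a n) (a m) ▸ hD (Set.mem_range_self n) (Set.mem_range_self m)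
  have hD0 : 0 ≤ D := (norm_nonneg _).trans (hD 0 0)
  intro δ hδ
  obtain ⟨ε, hε, hεδ⟩ : ∃ ε > 0, (2 + D) * ε = δ :=
    ⟨δ / (2 + D), by positivity, mul_div_cancel₀ δ (by positivity)⟩
  obtain ⟨q, hq, M, B, hB, hdist⟩ := h ε hε
  have : NeZero q := ⟨hq⟩
  refine ⟨q, hq, fun r ↦ a (q * M + r.val), ?_⟩
  have hlarge := tendsto_natCast_atTop_atTop (R := ℝ) |>.eventually_ge_atTop (D * (M + B.card) / ε)
  filter_upwards [hlarge] with N hN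
  rw [div_le_iff₀ hε] at hN
  have hM : (((Finset.Icc 1 N).filter (· < M)).card : ℝ) ≤ M := by
    refine Nat.cast_le.2 <| (Finset.card_le_card fun n hn ↦ ?_).trans_eq (Finset.card_range M)
    exact Finset.mem_range.2 (Finset.mem_filter.1 hn).2
  have hNB := card_filter_natCast_mem_le_add hB N
  calc ∑ n ∈ Finset.Icc 1 N, ‖a n - a (q * M + (n : ZMod q).val)‖
    _ ≤ ∑ n ∈ Finset.Icc 1 N,
        (ε + ((if n < M then D else 0) + if (n : ZMod q) ∈ B then D else 0)) :=
      Finset.sum_le_sum fun n _ ↦ norm_sub_le_add_ite hD hε.le hdist n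
    _ = N * ε + (((Finset.Icc 1 N).filter (· < M)).card * D +
        ((Finset.Icc 1 N).filter fun n : ℕ ↦ (n : ZMod q) ∈ B).card * D) := by
      simp [Finset.sum_add_distrib, ← Finset.sum_filter]
    _ ≤ N * ε + (M * D + (B.card + ε * N) * D) := by gcongr
    _ ≤ δ * N := by rw [← hεδ]; linarith

end RationallyAlmostPeriodic

section Horseshoe

variable {X : Type*}

theorem exists_forall_iterate_mem {ι : Type*} {f : X → X} {S : ι → Set X}
    (hne : ∀ i, (S i).Nonempty) (hS : ∀ i j, S j ⊆ f '' S i) (n : ℕ) (w : ℕ → ι) :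
    ∃ p, ∀ i ≤ n, f^[i] p ∈ S (w i) := by
  induction n generalizing w with
  | zero =>
    obtain ⟨p, hp⟩ := hne (w 0)
    exact ⟨p, fun i hi ↦ by rwa [Nat.le_zero.1 hi]⟩
  | succ n ih =>
    obtain ⟨p', hp'⟩ := ih fun i ↦ w (i + 1)
    obtain ⟨p, hp, rfl⟩ := hS (w 0) (w 1) (hp' 0 n.zero_le)
    refine ⟨p, fun i hi ↦ ?_⟩
    cases i with
    | zero => exact hp
    | succ i => exact hp' i (Nat.le_of_succ_le_succ hi)

/-- The sets `J` and `K` form a horseshoe of `f`: they are disjoint, compact, and the image of each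
of them contains both. Nonemptiness of `K` follows from that of `J`. -/
structure IsHorseshoe [TopologicalSpace X] (f : X → X) (J K : Set X) : Prop where
  isCompact_left : IsCompact J
  isCompact_right : IsCompact K
  disjoint : Disjoint J K
  nonempty_left : J.Nonempty
  subset_image_left : J ∪ K ⊆ f '' J
  subset_image_right : J ∪ K ⊆ f '' K

theorem IsHorseshoe.exists_iterate_mem_cond [TopologicalSpace X] {f : X → X} {J K : Set X}
    (h : IsHorseshoe f J K) {n : ℕ} (w : Fin n → Bool) :
    ∃ p, ∀ i : Fin n, f^[i] p ∈ cond (w i) J K := by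
  have hK : K.Nonempty := (h.nonempty_left.mono (Set.subset_union_left.trans
    h.subset_image_right)).of_image
  have hne (b : Bool) : (cond b J K).Nonempty := by
    cases b
    exacts [hK, h.nonempty_left]
  have hS (b b' : Bool) : cond b' J K ⊆ f '' cond b J K := by
    have hsub : cond b' J K ⊆ J ∪ K := by
      cases b'
      exacts [Set.subset_union_right, Set.subset_union_left]
    cases b
    exacts [hsub.trans h.subset_image_right, hsub.trans h.subset_image_left]
  obtain ⟨p, hp⟩ := exists_forall_iterate_mem hne hS n
    fun i ↦ if hi : i < n then w ⟨i, hi⟩ else true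
  exact ⟨p, fun i ↦ by simpa using hp i i.2.le⟩

open Dynamics UniformSpace in
theorem IsHorseshoe.exists_two_pow_le_netMaxcard [UniformSpace X] [T2Space X] {f : X → X}
    {J K : Set X} {N : ℕ} (h : IsHorseshoe f^[N] J K) (hN : N ≠ 0) :
    ∃ V ∈ uniformity X, ∀ n, ((2 ^ n : ℕ) : ℕ∞) ≤ netMaxcard f Set.univ V (N * n) := by
  classical
  obtain ⟨V, hV, hdisj⟩ :=
    h.disjoint.exists_uniform_thickening h.isCompact_left h.isCompact_right.isClosed
  refine ⟨V, hV, fun n ↦ ?_⟩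
  choose p hp using fun w : Fin n → Bool ↦ h.exists_iterate_mem_cond w
  have hsep (w w' : Fin n → Bool) (hne : w ≠ w') :
      Disjoint (ball (p w) (dynEntourage f V (N * n)))
        (ball (p w') (dynEntourage f V (N * n))) := by
    refine Set.disjoint_left.2 fun y hy hy' ↦ ?_
    obtain ⟨i, hi⟩ := Function.ne_iff.1 hne
    have hlt : N * i < N * n := Nat.mul_lt_mul_of_pos_left i.2 (Nat.pos_of_ne_zero hN)
    have hball := mem_ball_dynEntourage.1 hy _ hlt
    have hball' := mem_ball_dynEntourage.1 hy' _ hlt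
    have hJK := hp w i
    have hJK' := hp w' i
    rw [← Function.iterate_mul] at hJK hJK'
    simp only [Set.disjoint_iUnion_left, Set.disjoint_iUnion_right] at hdisj
    cases hw : w i <;> cases hw' : w' i <;>
      simp only [hw, hw', cond_true, cond_false, ne_eq, not_true_eq_false] at hi hJK hJK'
    · exact Set.disjoint_left.1 (hdisj _ hJK _ hJK') hball' hball
    · exact Set.disjoint_left.1 (hdisj _ hJK' _ hJK) hball hball'
  have hmem (w : Fin n → Bool) : p w ∈ ball (p w) (dynEntourage f V (N * n)) :=
    mem_ball_dynEntourage.2 fun k _ ↦ mem_ball_self _ hV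
  have hinj : Function.Injective p := fun w w' hww ↦ by
    by_contra hne
    exact Set.disjoint_left.1 (hsep w w' hne) (hmem w) (hww ▸ hmem w')
  have hnet : IsDynNetIn f Set.univ V (N * n) (Finset.univ.image p : Finset X) := by
    refine ⟨Set.subset_univ _, ?_⟩
    rw [Finset.coe_image, Finset.coe_univ, Set.image_univ]
    rintro _ ⟨w, rfl⟩ _ ⟨w', rfl⟩ hne
    exact hsep w w' (ne_of_apply_ne p hne)
  simpa [Finset.card_image_of_injective _ hinj] using hnet.card_le_netMaxcard

theorem IsHorseshoe.log_two_le_coverEntropy [UniformSpace X] [T2Space X] {f : X → X}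
    {J K : Set X} {N : ℕ} (h : IsHorseshoe f^[N] J K) (hN : N ≠ 0) :
    ENNReal.log 2 ≤ N * Dynamics.coverEntropy f Set.univ := by
  obtain ⟨V, hV, hcard⟩ := h.exists_two_pow_le_netMaxcard hN
  have hmono : Monotone fun n ↦ (Dynamics.netMaxcard f Set.univ V n : ENNReal) :=
    fun m n hmn ↦ ENat.toENNReal_mono (Dynamics.netMaxcard_monotone_time f Set.univ V hmn)
  calc ENNReal.log 2
    _ = ExpGrowth.expGrowthSup fun n ↦ 2 ^ n := ExpGrowth.expGrowthSup_pow.symm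
    _ ≤ ExpGrowth.expGrowthSup fun n ↦ (Dynamics.netMaxcard f Set.univ V (N * n) : ENNReal) :=
      ExpGrowth.expGrowthSup_monotone fun n ↦ by simpa using ENat.toENNReal_mono (hcard n)
    _ = N * Dynamics.netEntropyEntourage f Set.univ V := hmono.expGrowthSup_comp_mul hN
    _ ≤ N * Dynamics.coverEntropy f Set.univ := by
      gcongr
      exact Dynamics.netEntropyEntourage_le_coverEntropy f Set.univ hV

/-- No iterate of `f` has a horseshoe; this is the only consequence of zero entropy that the study
of the orbits of `f` relies on. -/
def HorseshoeFree [TopologicalSpace X] (f : X → X) : Prop :=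
  ∀ N ≠ 0, ∀ J K, ¬ IsHorseshoe f^[N] J K

theorem HorseshoeFree.iterate [TopologicalSpace X] {f : X → X} (h : HorseshoeFree f) {m : ℕ}
    (hm : m ≠ 0) : HorseshoeFree f^[m] := fun N hN J K ↦ by
  rw [← Function.iterate_mul]
  exact h _ (mul_ne_zero hm hN) J K

theorem horseshoeFree_of_coverEntropy_eq_zero [UniformSpace X] [T2Space X] {f : X → X}
    (h : Dynamics.coverEntropy f Set.univ = 0) : HorseshoeFree f := fun N hN J K hJK ↦ by
  have hlog := hJK.log_two_le_coverEntropy hN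
  rw [h, mul_zero, ENNReal.log_le_zero_iff] at hlog
  exact absurd hlog (by norm_num)

end Horseshoe

section IntervalHorseshoe

variable {X : Type*} [ConditionallyCompleteLinearOrder X] [TopologicalSpace X] [OrderTopology X]
  {f : X → X}

theorem isHorseshoe_Icc {a b c d : X} (hab : a ≤ b) (hbc : b < c) (hcd : c ≤ d)
    (hleft : Set.Icc a d ⊆ f '' Set.Icc a b) (hright : Set.Icc a d ⊆ f '' Set.Icc c d) :
    IsHorseshoe f (Set.Icc a b) (Set.Icc c d) := by
  have hunion : Set.Icc a b ∪ Set.Icc c d ⊆ Set.Icc a d :=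
    Set.union_subset (Set.Icc_subset_Icc_right (hbc.le.trans hcd))
      (Set.Icc_subset_Icc_left (hab.trans hbc.le))
  exact {
    isCompact_left := isCompact_Icc
    isCompact_right := isCompact_Icc
    disjoint := Set.disjoint_left.2 fun y hy hy' ↦ (hy.2.trans_lt hbc).not_ge hy'.1
    nonempty_left := Set.nonempty_Icc.2 hab
    subset_image_left := hunion.trans hleft
    subset_image_right := hunion.trans hright }

variable [DenselyOrdered X]

theorem exists_isFixedPt_forall_map_lt (hf : Continuous f) {a c : X} (ha : f a < a) (hac : a < c)
    (hc : f c = c) : ∃ c₀, a < c₀ ∧ c₀ ≤ c ∧ f c₀ = c₀ ∧ ∀ y, a ≤ y → y < c₀ → f y < y := by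
  let S : Set X := {y | a ≤ y ∧ f y = y}
  have hS : IsClosed S := isClosed_Ici.inter (isClosed_eq hf continuous_id)
  have hSa : BddBelow S := ⟨a, fun y hy ↦ hy.1⟩
  obtain ⟨hle, hfix⟩ : sInf S ∈ S := hS.csInf_mem ⟨c, hac.le, hc⟩ hSa
  refine ⟨sInf S, hle.lt_of_ne fun h ↦ ?_, csInf_le hSa ⟨hac.le, hc⟩, hfix, fun y hay hy ↦ ?_⟩
  · rw [← h] at hfix
    exact ha.ne hfix
  · by_contra! hyf
    obtain ⟨w, hw, hfw⟩ := exists_mem_uIcc_isFixedPt hf.continuousOn hyf ha.le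
    rw [Set.uIcc_of_ge hay] at hw
    exact ((csInf_le hSa ⟨hw.1, hfw⟩).trans hw.2).not_gt hy

theorem exists_isHorseshoe_of_iterate_lt_of_le (hf : Continuous f) {a c : X} {j : ℕ}
    (hac : a < c) (hc : f c = c) (hbelow : ∀ y, a ≤ y → y < c → f y < y)
    (hlt : f^[j] a < c) (hle : c ≤ f^[j + 1] a) : ∃ J K, IsHorseshoe f^[j + 1] J K := by
  set w := f^[j] a with hw
  rw [Function.iterate_succ_apply', ← hw] at hle
  have ha : f a < a := hbelow a le_rfl hac
  have hwa : w < a := not_le.1 fun h ↦ ((hbelow w h hlt).trans hlt).not_ge hle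
  obtain ⟨p, hp, hfp⟩ := intermediate_value_Icc' hwa.le hf.continuousOn ⟨ha.le, hac.le.trans hle⟩
  have hpa : p < a := hp.2.lt_of_ne fun h ↦ ha.ne (h ▸ hfp)
  have hcover_left : Set.Icc a c ⊆ f '' Set.Icc w p := by
    refine subset_trans ?_ (intermediate_value_Icc' hp.1 hf.continuousOn)
    rw [hfp]
    exact Set.Icc_subset_Icc_right hle
  have hcover_right : Set.Icc a c ⊆ f '' Set.Icc a c := by
    refine subset_trans ?_ (intermediate_value_Icc hac.le hf.continuousOn)
    rw [hc]
    exact Set.Icc_subset_Icc_left ha.le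
  have hcover_iterate : Set.Icc w c ⊆ f^[j] '' Set.Icc a c := by
    have := intermediate_value_Icc hac.le (hf.iterate j).continuousOn
    rwa [Function.iterate_fixed hc] at this
  refine ⟨_, _, isHorseshoe_Icc hp.1 hpa hac.le ?_ ?_⟩ <;>
    rw [Function.iterate_succ, Set.image_comp]
  exacts [hcover_iterate.trans (Set.image_mono hcover_left),
    hcover_iterate.trans (Set.image_mono hcover_right)]

theorem HorseshoeFree.iterate_lt_of_map_lt (hfree : HorseshoeFree f) (hf : Continuous f) {a c : X}
    (ha : f a < a) (hac : a < c) (hc : f c = c) (k : ℕ) : f^[k] a < c := by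
  obtain ⟨c₀, hac₀, hc₀c, hc₀, hbelow⟩ := exists_isFixedPt_forall_map_lt hf ha hac hc
  refine lt_of_lt_of_le ?_ hc₀c
  induction k with
  | zero => exact hac₀
  | succ k ih =>
    by_contra! hle
    obtain ⟨J, K, hJK⟩ := exists_isHorseshoe_of_iterate_lt_of_le hf hac₀ hc₀ hbelow ih hle
    exact hfree _ k.succ_ne_zero J K hJK

theorem HorseshoeFree.lt_iterate_of_lt_map (hfree : HorseshoeFree f) (hf : Continuous f) {a c : X}
    (ha : a < f a) (hca : c < a) (hc : f c = c) (k : ℕ) : c < f^[k] a :=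
  HorseshoeFree.iterate_lt_of_map_lt (X := Xᵒᵈ) hfree hf ha hca hc k

end IntervalHorseshoe

section Pivot

/-- The fixed point `z` of `f` is a pivot of the orbit of `x`: it does not belong to the orbit, and
`f` moves every point of the orbit in the direction of `z` (possibly beyond `z`). -/
structure IsPivot {X : Type*} [LinearOrder X] (f : X → X) (x z : X) : Prop where
  map_eq : f z = z
  iterate_ne (n : ℕ) : f^[n] x ≠ z
  lt_of_lt (n : ℕ) : f^[n] x < z → f^[n] x < f^[n + 1] x
  lt_of_gt (n : ℕ) : z < f^[n] x → f^[n + 1] x < f^[n] x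

namespace IsPivot

section LinearOrder

variable {X : Type*} [LinearOrder X] {f : X → X} {x z : X}

theorem dual (h : IsPivot f x z) : IsPivot (X := Xᵒᵈ) f x z :=
  ⟨h.map_eq, h.iterate_ne, h.lt_of_gt, h.lt_of_lt⟩

theorem uIcc_succ_subset (h : IsPivot f x z) {n : ℕ} (hn : f^[n] x < z ↔ f^[n + 1] x < z) :
    Set.uIcc (f^[n + 1] x) z ⊆ Set.uIcc (f^[n] x) z := by
  rcases (h.iterate_ne n).lt_or_gt with hlt | hgt
  · rw [Set.uIcc_of_le hlt.le, Set.uIcc_of_le (hn.1 hlt).le]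
    exact Set.Icc_subset_Icc_left (h.lt_of_lt n hlt).le
  · have hgt' : z ≤ f^[n + 1] x := not_lt.1 fun hlt ↦ hgt.not_gt (hn.2 hlt)
    rw [Set.uIcc_of_ge hgt.le, Set.uIcc_of_ge hgt']
    exact Set.Icc_subset_Icc_right (h.lt_of_gt n hgt).le

end LinearOrder

variable {X : Type*} [ConditionallyCompleteLinearOrder X] [TopologicalSpace X] [OrderTopology X]
  [DenselyOrdered X] {f : X → X} {x z : X}

theorem uIcc_iterate_add_subset_image (h : IsPivot f x z) (hf : Continuous f) (i k : ℕ) :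
    Set.uIcc (f^[k + i] x) z ⊆ f^[k] '' Set.uIcc (f^[i] x) z := by
  have := intermediate_value_uIcc (a := f^[i] x) (b := z) (hf.iterate k).continuousOn
  rwa [Function.iterate_fixed h.map_eq, ← Function.iterate_add_apply] at this

/- Each time two consecutive points of the orbit are on the same side of `z`, the interval between
`z` and the orbit shrinks, so its images run ahead of the orbit by one more unit of time. -/
theorem eventually_uIcc_subset_image (h : IsPivot f x z) (hf : Continuous f)
    (hrep : ∃ᶠ n in atTop, (f^[n] x < z ↔ f^[n + 1] x < z)) (i s : ℕ) :
    ∀ᶠ k in atTop, Set.uIcc (f^[k + (i + s)] x) z ⊆ f^[k] '' Set.uIcc (f^[i] x) z := by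
  induction s with
  | zero => exact Eventually.of_forall fun k ↦ h.uIcc_iterate_add_subset_image hf i k
  | succ s ih =>
    rw [← map_add_atTop_eq_nat (i + s), frequently_map] at hrep
    obtain ⟨m, hrep, hm⟩ := (hrep.and_eventually ih).exists
    filter_upwards [eventually_ge_atTop m] with k hk
    obtain ⟨d, rfl⟩ := Nat.exists_eq_add_of_le' hk
    calc Set.uIcc (f^[d + m + (i + (s + 1))] x) z
      _ = Set.uIcc (f^[d + (m + (i + s) + 1)] x) z := by
        rw [show d + m + (i + (s + 1)) = d + (m + (i + s) + 1) by ring]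
      _ ⊆ f^[d] '' Set.uIcc (f^[m + (i + s) + 1] x) z := h.uIcc_iterate_add_subset_image hf _ d
      _ ⊆ f^[d] '' (f^[m] '' Set.uIcc (f^[i] x) z) :=
        Set.image_mono ((h.uIcc_succ_subset hrep).trans hm)
      _ = f^[d + m] '' Set.uIcc (f^[i] x) z := by rw [← Set.image_comp, ← Function.iterate_add]

theorem iterate_add_lt_iff_of_lt (h : IsPivot f x z) (hf : Continuous f) (hfree : HorseshoeFree f)
    (hrep : ∃ᶠ n in atTop, (f^[n] x < z ↔ f^[n + 1] x < z)) {i j : ℕ} (hij : f^[i] x < f^[j] x)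
    (hj : f^[j] x < z) (hrec : ∃ᶠ n in atTop, f^[n] x ≤ f^[i] x) (k : ℕ) :
    f^[k + i] x < z ↔ f^[k + j] x < z := by
  by_contra hside
  obtain ⟨y, hy, hyz⟩ : z ∈ f^[k] '' Set.uIcc (f^[i] x) (f^[j] x) := by
    refine intermediate_value_uIcc (hf.iterate k).continuousOn (Set.mem_uIcc.2 ?_)
    rw [← Function.iterate_add_apply, ← Function.iterate_add_apply]
    have := h.iterate_ne (k + i)
    have := h.iterate_ne (k + j)
    grind
  rw [Set.uIcc_of_le hij.le] at hy
  have hyj : y < f^[j] x := hy.2.lt_of_ne fun hyj ↦ h.iterate_ne (k + j) <| by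
    rw [Function.iterate_add_apply, ← hyj, hyz]
  have hleft : ∀ᶠ N in atTop, Set.uIcc (f^[N + (i + j)] x) z ⊆ f^[N] '' Set.Icc (f^[i] x) y := by
    rw [← map_add_atTop_eq_nat k, eventually_map]
    filter_upwards [h.eventually_uIcc_subset_image hf hrep (k + i) j] with N hN
    have hIcc : Set.uIcc (f^[k + i] x) z ⊆ f^[k] '' Set.Icc (f^[i] x) y := by
      have := intermediate_value_uIcc (a := f^[i] x) (b := y) (hf.iterate k).continuousOn
      rwa [hyz, ← Function.iterate_add_apply, Set.uIcc_of_le hy.1] at this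
    rw [add_assoc, ← add_assoc k, Function.iterate_add f N k, Set.image_comp]
    exact hN.trans (Set.image_mono hIcc)
  have hright : ∀ᶠ N in atTop, Set.uIcc (f^[N + (i + j)] x) z ⊆ f^[N] '' Set.Icc (f^[j] x) z := by
    rw [add_comm i, ← Set.uIcc_of_le hj.le]
    exact h.eventually_uIcc_subset_image hf hrep j i
  rw [← map_add_atTop_eq_nat (i + j), frequently_map] at hrec
  obtain ⟨N, hN, hNleft, hNright, hN0⟩ :=
    (hrec.and_eventually (hleft.and (hright.and (eventually_ne_atTop 0)))).exists
  rw [Set.uIcc_of_le (hN.trans (hij.trans hj).le)] at hNleft hNright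
  have hIcc := Set.Icc_subset_Icc_left (b := z) hN
  exact hfree N hN0 _ _
    (isHorseshoe_Icc hy.1 hyj hj.le (hIcc.trans hNleft) (hIcc.trans hNright))

theorem iterate_add_lt_iff (h : IsPivot f x z) (hf : Continuous f) (hfree : HorseshoeFree f)
    (hrep : ∃ᶠ n in atTop, (f^[n] x < z ↔ f^[n + 1] x < z)) {i j : ℕ} (hi : f^[i] x < z)
    (hj : f^[j] x < z) (hreci : ∃ᶠ n in atTop, f^[n] x ≤ f^[i] x)
    (hrecj : ∃ᶠ n in atTop, f^[n] x ≤ f^[j] x) (k : ℕ) :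
    f^[k + i] x < z ↔ f^[k + j] x < z := by
  rcases lt_trichotomy (f^[i] x) (f^[j] x) with hij | hij | hij
  · exact h.iterate_add_lt_iff_of_lt hf hfree hrep hij hj hreci k
  · rw [Function.iterate_add_apply, Function.iterate_add_apply, hij]
  · exact (h.iterate_add_lt_iff_of_lt hf hfree hrep hij hi hrecj k).symm

theorem eventually_lt_of_lt_of_lt (h : IsPivot f x z) (hf : Continuous f) (hfree : HorseshoeFree f)
    (hrep : ∃ᶠ n in atTop, (f^[n] x < z ↔ f^[n + 1] x < z)) {p : ℕ} (hp : f^[p] x < z)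
    (hp' : f^[p + 1] x < z) : ∀ᶠ n in atTop, f^[p] x < f^[n] x := by
  by_contra hcon
  simp only [not_eventually, not_lt] at hcon
  have hside := h.iterate_add_lt_iff_of_lt hf hfree hrep (h.lt_of_lt p hp) hp' hcon
  have hlt (k : ℕ) : f^[k + p] x < z := by
    induction k with
    | zero => rwa [zero_add]
    | succ k ih =>
      rw [add_assoc, add_comm 1 p]
      exact (hside k).1 ih
  have hmono : StrictMono fun k ↦ f^[k + p] x := strictMono_nat_of_lt_succ fun k ↦ by
    rw [add_right_comm]
    exact h.lt_of_lt _ (hlt k)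
  rw [← map_add_atTop_eq_nat p, frequently_map] at hcon
  obtain ⟨k, hle, hk⟩ := (hcon.and_eventually (eventually_gt_atTop 0)).exists
  exact hle.not_gt (by simpa using hmono hk)

end IsPivot

end Pivot

section LimitOrbit

theorem eventually_atTop_of_add_mul {p : ℕ → Prop} {q : ℕ} (hq : q ≠ 0)
    (h : ∀ r < q, ∀ᶠ k in atTop, p (r + k * q)) : ∀ᶠ n in atTop, p n := by
  have hall : ∀ᶠ k in atTop, ∀ r ∈ Finset.range q, p (r + k * q) :=
    (eventually_all_finset _).2 fun r hr ↦ h r (Finset.mem_range.1 hr)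
  filter_upwards [(Nat.tendsto_div_const_atTop hq).eventually hall] with n hn
  simpa only [Nat.mod_add_div'] using
    hn (n % q) (Finset.mem_range.2 (n.mod_lt (Nat.pos_of_ne_zero hq)))

section TopologicalSpace

variable {X : Type*} [TopologicalSpace X] {f : X → X} {x α : X} {t : ℕ}

theorem tendsto_iterate_add_mul (hf : Continuous f)
    (h : Tendsto (fun k ↦ f^[k * t] x) atTop (𝓝 α)) (r : ℕ) :
    Tendsto (fun k ↦ f^[r + k * t] x) atTop (𝓝 (f^[r] α)) := by
  simp only [Function.iterate_add_apply]
  exact ((hf.iterate r).tendsto α).comp h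

theorem isPeriodicPt_of_tendsto_iterate_mul [T2Space X] (hf : Continuous f)
    (h : Tendsto (fun k ↦ f^[k * t] x) atTop (𝓝 α)) : Function.IsPeriodicPt f t α :=
  isFixedPt_of_tendsto_iterate (x := x)
    (by simpa only [← Function.iterate_mul, mul_comm t] using h) (hf.iterate t).continuousAt

theorem tendsto_iterate_of_tendsto_iterate_mul (hf : Continuous f) (ht : 0 < t)
    (hα : f α = α) (h : Tendsto (fun k ↦ f^[k * t] x) atTop (𝓝 α)) :
    Tendsto (fun n ↦ f^[n] x) atTop (𝓝 α) := by
  refine tendsto_def.2 fun U hU ↦ eventually_atTop_of_add_mul ht.ne' fun r _ ↦ ?_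
  exact tendsto_iterate_add_mul hf h r (by rwa [Function.iterate_fixed hα])

end TopologicalSpace

theorem map_iterate_ne_of_isPeriodicPt {X : Type*} {f : X → X} {α : X} {t : ℕ} (ht : 0 < t)
    (hper : Function.IsPeriodicPt f t α) (hα : f α ≠ α) (r : ℕ) : f (f^[r] α) ≠ f^[r] α := by
  intro h
  have hmin : Function.minimalPeriod f (f^[r] α) = 1 :=
    Function.minimalPeriod_eq_one_iff_isFixedPt.2 h
  rw [Function.minimalPeriod_apply_iterate ⟨t, ht, hper⟩] at hmin
  exact hα (Function.minimalPeriod_eq_one_iff_isFixedPt.1 hmin)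

theorem iterate_lt_iff_of_tendsto_iterate_mul {X : Type*} [LinearOrder X] [TopologicalSpace X]
    [OrderTopology X] {f : X → X} {x z α : X} {t : ℕ} (hf : Continuous f)
    (hside : Function.Periodic (fun n ↦ f^[n] x < z) t)
    (hlim : Tendsto (fun k ↦ f^[k * t] x) atTop (𝓝 α)) {r : ℕ} (hr : f^[r] α ≠ z) :
    f^[r] x < z ↔ f^[r] α < z := by
  have hrep (k : ℕ) : f^[r + k * t] x < z ↔ f^[r] x < z := iff_of_eq (hside.nat_mul k r)
  have hlim_r := tendsto_iterate_add_mul hf hlim r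
  constructor <;> intro hlt
  · exact (le_of_tendsto' hlim_r fun k ↦ ((hrep k).2 hlt).le).lt_of_ne hr
  · by_contra hnlt
    exact hlt.not_ge (ge_of_tendsto' hlim_r fun k ↦ not_lt.1 (mt (hrep k).1 hnlt))

theorem map_eq_of_frequently_lt_of_le {X : Type*} [LinearOrder X] [TopologicalSpace X]
    [OrderTopology X] {f : X → X} {x α : X} (hf : Continuous f)
    (hα : ∀ b < α, ∀ᶠ n in atTop, b < f^[n] x)
    (hup : ∃ᶠ p in atTop, f^[p] x < f^[p + 1] x ∧ f^[p + 1] x ≤ α) : f α = α := by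
  simp only [Function.iterate_succ_apply'] at hup
  have hnear {U : Set X} (hU : IsOpen U) (hαU : α ∈ U) : ∃ y ∈ U, y < f y ∧ f y ≤ α := by
    obtain ⟨p₀, hp₀⟩ := hup.exists
    obtain ⟨a, ha, haU⟩ :=
      exists_Ioc_subset_of_mem_nhds (hU.mem_nhds hαU) ⟨_, hp₀.1.trans_le hp₀.2⟩
    obtain ⟨p, hp, hap⟩ := (hup.and_eventually (hα a ha)).exists
    exact ⟨_, haU ⟨hap, (hp.1.trans_le hp.2).le⟩, hp⟩
  refine le_antisymm ?_ ?_ <;> by_contra! hlt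
  · obtain ⟨y, hy, -, hyα⟩ := hnear (isOpen_lt continuous_const hf) hlt
    exact hy.not_ge hyα
  · obtain ⟨y, hy, hyf, -⟩ := hnear (isOpen_lt hf continuous_id) hlt
    exact hy.not_gt hyf

namespace IsPivot

section LinearOrder

variable {X : Type*} [LinearOrder X] {f : X → X} {x z : X}

theorem shift (h : IsPivot f x z) (m : ℕ) : IsPivot f (f^[m] x) z where
  map_eq := h.map_eq
  iterate_ne n := by simpa only [Function.iterate_add_apply] using h.iterate_ne (n + m)
  lt_of_lt n := by
    simpa only [← Function.iterate_add_apply, add_right_comm n m] using h.lt_of_lt (n + m)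
  lt_of_gt n := by
    simpa only [← Function.iterate_add_apply, add_right_comm n m] using h.lt_of_gt (n + m)

variable [TopologicalSpace X] [OrderTopology X] {α : X} {t : ℕ}

theorem of_tendsto_iterate_mul (h : IsPivot f x z) (hf : Continuous f) (ht : 0 < t)
    (hside : Function.Periodic (fun n ↦ f^[n] x < z) t)
    (hlim : Tendsto (fun k ↦ f^[k * t] x) atTop (𝓝 α)) (hα : f α ≠ α) : IsPivot f α z := by
  have hmove (r : ℕ) : f^[r + 1] α ≠ f^[r] α := by
    rw [Function.iterate_succ_apply']
    exact map_iterate_ne_of_isPeriodicPt ht (isPeriodicPt_of_tendsto_iterate_mul hf hlim) hα r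
  have hne (r : ℕ) : f^[r] α ≠ z := fun hz ↦ hmove r <| by
    rw [Function.iterate_succ_apply', hz, h.map_eq]
  have hrep (r k : ℕ) : f^[r + k * t] x < z ↔ f^[r] α < z :=
    (iff_of_eq (hside.nat_mul k r)).trans
      (iterate_lt_iff_of_tendsto_iterate_mul hf hside hlim (hne r))
  have hlim_r := tendsto_iterate_add_mul hf hlim
  refine ⟨h.map_eq, hne, fun r hr ↦ ?_, fun r hr ↦ ?_⟩
  · refine (le_of_tendsto_of_tendsto' (hlim_r r) (hlim_r (r + 1)) fun k ↦ ?_).lt_of_ne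
      (hmove r).symm
    rw [add_right_comm]
    exact (h.lt_of_lt _ ((hrep r k).2 hr)).le
  · refine (le_of_tendsto_of_tendsto' (hlim_r (r + 1)) (hlim_r r) fun k ↦ ?_).lt_of_ne (hmove r)
    rw [add_right_comm]
    refine (h.lt_of_gt _ ((h.iterate_ne _).symm.lt_of_le (not_lt.1 fun hlt ↦ ?_))).le
    exact hr.not_gt ((hrep r k).1 hlt)

end LinearOrder

section Continuity

variable {X : Type*} [ConditionallyCompleteLinearOrder X] [DenselyOrdered X] [TopologicalSpace X]
  [OrderTopology X] {f : X → X} {x z α : X}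

theorem map_eq_of_tendsto_iterate_mul (h : IsPivot f x z) (hf : Continuous f)
    (hfree : HorseshoeFree f) {t : ℕ} (ht : 0 < t)
    (hside : Function.Periodic (fun n ↦ f^[n] x < z) t) (hx : x < z) (hfx : f x < z)
    (hlim : Tendsto (fun k ↦ f^[k * t] x) atTop (𝓝 α)) : f α = α := by
  by_contra hα
  have hpivot := h.of_tendsto_iterate_mul hf ht hside hlim hα
  have hlt (r : ℕ) := iterate_lt_iff_of_tendsto_iterate_mul hf hside hlim (hpivot.iterate_ne r)
  have hlt₀ : α < z := (hlt 0).1 hx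
  have hlt₁ : f α < z := (hlt 1).1 hfx
  have hreturn : ∃ᶠ n in atTop, f^[n] α = α :=
    frequently_atTop.2 fun m ↦ ⟨m * t, Nat.le_mul_of_pos_right m ht,
      (isPeriodicPt_of_tendsto_iterate_mul hf hlim).const_mul m⟩
  have hrep : ∃ᶠ n in atTop, (f^[n] α < z ↔ f^[n + 1] α < z) := hreturn.mono fun n hn ↦ by
    rw [Function.iterate_succ_apply', hn]
    exact iff_of_true hlt₀ hlt₁
  obtain ⟨n, hn, hαn⟩ := (hreturn.and_eventually
    (hpivot.eventually_lt_of_lt_of_lt hf hfree hrep (p := 0) hlt₀ hlt₁)).exists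
  exact hαn.ne' hn

theorem tendsto_of_periodic (h : IsPivot f x z) (hf : Continuous f) (hfree : HorseshoeFree f)
    {t : ℕ} (ht : 0 < t) (hside : Function.Periodic (fun n ↦ f^[n] x < z) t) (hx : x < z)
    (hfx : f x < z) (hα : ∀ b < α, ∀ᶠ n in atTop, b < f^[n] x)
    (hle : ∀ p, f^[p] x < z → f^[p + 1] x < z → f^[p] x ≤ α) :
    Tendsto (fun n ↦ f^[n] x) atTop (𝓝 α) := by
  have hlim : Tendsto (fun k ↦ f^[k * t] x) atTop (𝓝 α) := by
    refine tendsto_order.2 ⟨fun b hb ↦ ?_, fun b hb ↦ Eventually.of_forall fun k ↦ ?_⟩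
    · exact (tendsto_id.atTop_mul_const' ht).eventually (hα b hb)
    · have h₀ : f^[k * t] x < z := (iff_of_eq (hside.nat_mul k).eq).2 hx
      have h₁ : f^[1 + k * t] x < z := (iff_of_eq (hside.nat_mul k 1)).2 hfx
      exact (hle _ h₀ (by rwa [add_comm])).trans_lt hb
  exact tendsto_iterate_of_tendsto_iterate_mul hf ht
    (h.map_eq_of_tendsto_iterate_mul hf hfree ht hside hx hfx hlim) hlim

theorem exists_periodic_lt (h : IsPivot f x z) (hf : Continuous f) (hfree : HorseshoeFree f)
    (hret : ∃ᶠ p in atTop,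
      (f^[p] x < z ∧ f^[p + 1] x < z) ∧ ∃ᶠ n in atTop, f^[n] x ≤ f^[p + 1] x) :
    ∃ m t, 0 < t ∧ f^[m] x < z ∧ f^[m + 1] x < z ∧
      Function.Periodic (fun n ↦ f^[n + m] x < z) t := by
  have hrep : ∃ᶠ n in atTop, (f^[n] x < z ↔ f^[n + 1] x < z) :=
    hret.mono fun p hp ↦ iff_of_true hp.1.1 hp.1.2
  obtain ⟨p, ⟨-, hp⟩, hpret⟩ := hret.exists
  obtain ⟨q, hpq, ⟨hq, hq'⟩, hqret⟩ := frequently_atTop.1 hret (p + 1)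
  obtain ⟨s, rfl⟩ := Nat.exists_eq_add_of_le' hpq
  refine ⟨_, s + 1, s.succ_pos, hq, hq', fun n ↦ ?_⟩
  have := h.iterate_add_lt_iff hf hfree hrep hp hq' hpret hqret (n + s)
  simp only [eq_iff_iff]
  convert this.symm using 3 <;> ring

theorem tendsto_of_frequently_return (h : IsPivot f x z) (hf : Continuous f)
    (hfree : HorseshoeFree f) (hα : ∀ b < α, ∀ᶠ n in atTop, b < f^[n] x)
    (hle : ∀ p, f^[p] x < z → f^[p + 1] x < z → f^[p] x ≤ α)
    (hret : ∃ᶠ p in atTop,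
      (f^[p] x < z ∧ f^[p + 1] x < z) ∧ ∃ᶠ n in atTop, f^[n] x ≤ f^[p + 1] x) :
    Tendsto (fun n ↦ f^[n] x) atTop (𝓝 α) := by
  obtain ⟨m, t, ht, hm, hm', hside⟩ := h.exists_periodic_lt hf hfree hret
  have hiter (n : ℕ) : f^[n] (f^[m] x) = f^[n + m] x := (Function.iterate_add_apply f n m x).symm
  have hshift : Tendsto (fun n ↦ f^[n] (f^[m] x)) atTop (𝓝 α) := by
    refine (h.shift m).tendsto_of_periodic hf hfree ht (by simpa only [hiter] using hside) hm
      (by rwa [← Function.iterate_succ_apply' f m]) (fun b hb ↦ ?_) fun p ↦ ?_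
    · simpa only [hiter] using (tendsto_add_atTop_nat m).eventually (hα b hb)
    · simpa only [hiter, add_right_comm p 1 m] using hle (p + m)
  exact (tendsto_add_atTop_iff_nat m).1 (by simpa only [hiter] using hshift)

theorem lt_of_frequently_lt_of_le (h : IsPivot f x z) (hf : Continuous f) (hfree : HorseshoeFree f)
    (hα : f α = α) (hup : ∃ᶠ p in atTop, f^[p] x < f^[p + 1] x ∧ f^[p + 1] x ≤ α) {n : ℕ}
    (hn : f^[n] x < z) : f^[n] x < α := by
  by_contra! hle
  have hlt : f^[n] x < f (f^[n] x) := by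
    simpa only [Function.iterate_succ_apply'] using h.lt_of_lt n hn
  have hαn : α < f^[n] x := hle.lt_of_ne fun heq ↦ hlt.ne (heq ▸ hα.symm)
  obtain ⟨p, hp, hp₁, hp₂⟩ := frequently_atTop.1 hup n
  obtain ⟨d, rfl⟩ := Nat.exists_eq_add_of_le' hp
  refine (hp₁.trans_le hp₂).not_gt ?_
  simpa only [Function.iterate_add_apply] using hfree.lt_iterate_of_lt_map hf hlt hαn hα d

theorem tendsto_of_frequently_lt_of_le (h : IsPivot f x z) (hf : Continuous f)
    (hfree : HorseshoeFree f) (hα : ∀ b < α, ∀ᶠ n in atTop, b < f^[n] x)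
    (hup : ∃ᶠ p in atTop, f^[p] x < f^[p + 1] x ∧ f^[p + 1] x ≤ α) :
    Tendsto (fun n ↦ f^[n] x) atTop (𝓝 α) := by
  have hmap := map_eq_of_frequently_lt_of_le hf hα hup
  refine tendsto_order.2 ⟨hα, fun b hb ↦ ?_⟩
  obtain ⟨p, hp₁, hp₂⟩ := hup.exists
  have hnhds : f ⁻¹' Set.Iio b ∈ 𝓝 α :=
    hf.continuousAt.preimage_mem_nhds (by rw [hmap]; exact Iio_mem_nhds hb)
  obtain ⟨a, ha, hab⟩ := exists_Ioc_subset_of_mem_nhds hnhds ⟨_, hp₁.trans_le hp₂⟩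
  obtain ⟨M, hM⟩ := eventually_atTop.1 (hα a ha)
  obtain ⟨m, hMm, hm₁, hm₂⟩ := frequently_atTop.1 hup M
  filter_upwards [eventually_ge_atTop m] with n hn
  induction n, hn using Nat.le_induction with
  | base => exact (hm₁.trans_le hm₂).trans hb
  | succ n hn ih =>
    rcases (h.iterate_ne n).lt_or_gt with hlt | hgt
    · rw [Function.iterate_succ_apply']
      exact hab ⟨hM n (hMm.trans hn), (h.lt_of_frequently_lt_of_le hf hfree hmap hup hlt).le⟩
    · exact (h.lt_of_gt n hgt).trans ih

end Continuity

section Complete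

variable {X : Type*} [CompleteLinearOrder X] [DenselyOrdered X] [TopologicalSpace X]
  [OrderTopology X] {f : X → X} {x z : X}

theorem tendsto_liminf_of_frequently_lt (h : IsPivot f x z) (hf : Continuous f)
    (hfree : HorseshoeFree f) (hlt : ∃ᶠ p in atTop, f^[p] x < z ∧ f^[p + 1] x < z) :
    Tendsto (fun n ↦ f^[n] x) atTop (𝓝 (liminf (fun n ↦ f^[n] x) atTop)) := by
  set α := liminf (fun n ↦ f^[n] x) atTop
  have hrep : ∃ᶠ n in atTop, (f^[n] x < z ↔ f^[n + 1] x < z) :=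
    hlt.mono fun p hp ↦ iff_of_true hp.1 hp.2
  have hα (b) (hb : b < α) : ∀ᶠ n in atTop, b < f^[n] x := eventually_lt_of_lt_liminf hb
  have hle {p : ℕ} (hp : ∀ᶠ n in atTop, f^[p] x < f^[n] x) : f^[p] x ≤ α :=
    le_liminf_of_le (by isBoundedDefault) (hp.mono fun n hn ↦ hn.le)
  by_cases hret : ∃ᶠ p in atTop,
      (f^[p] x < z ∧ f^[p + 1] x < z) ∧ ∃ᶠ n in atTop, f^[n] x ≤ f^[p + 1] x
  · exact h.tendsto_of_frequently_return hf hfree hα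
      (fun p hp hp' ↦ hle (h.eventually_lt_of_lt_of_lt hf hfree hrep hp hp')) hret
  · refine h.tendsto_of_frequently_lt_of_le hf hfree hα ?_
    refine (hlt.and_eventually (not_frequently.1 hret)).mono fun p ⟨hp, hnret⟩ ↦
      ⟨h.lt_of_lt p hp.1, hle ?_⟩
    simpa only [hp, true_and, not_frequently, not_le, and_self] using hnret

end Complete
end IsPivot

end LimitOrbit

section Alternation

section ConditionallyComplete

variable {X : Type*} [ConditionallyCompleteLinearOrder X] [DenselyOrdered X] [TopologicalSpace X]
  [OrderTopology X] {f : X → X} {x : X}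

theorem HorseshoeFree.iterate_lt_iterate (hfree : HorseshoeFree f) (hf : Continuous f) {m n : ℕ}
    (hm : f^[m] x < f (f^[m] x)) (hn : f (f^[n] x) < f^[n] x) : f^[m] x < f^[n] x := by
  have horbit (i d : ℕ) : f^[d] (f^[i] x) = f^[d + i] x := (Function.iterate_add_apply f d i x).symm
  by_contra! hle
  obtain ⟨c, hc, hfc⟩ := exists_mem_uIcc_isFixedPt hf.continuousOn hm.le hn.le
  rw [Set.uIcc_of_ge hle] at hc
  have hnc : f^[n] x < c := hc.1.lt_of_ne fun h ↦ hn.ne (h ▸ hfc)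
  have hcm : c < f^[m] x := hc.2.lt_of_ne fun h ↦ hm.ne (h ▸ hfc.symm)
  rcases le_total n m with h | h <;> obtain ⟨d, rfl⟩ := Nat.exists_eq_add_of_le' h
  · exact hcm.not_gt (horbit n d ▸ hfree.iterate_lt_of_map_lt hf hn hnc hfc d)
  · exact hnc.not_gt (horbit m d ▸ hfree.lt_iterate_of_lt_map hf hm hcm hfc d)

end ConditionallyComplete

variable {X : Type*} [CompleteLinearOrder X] [DenselyOrdered X] [TopologicalSpace X]
  [OrderTopology X] {f : X → X} {x : X}

theorem exists_isPivot (hfree : HorseshoeFree f) (hf : Continuous f)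
    (hdiv : ¬∃ l, Tendsto (fun n ↦ f^[n] x) atTop (𝓝 l)) : ∃ z, IsPivot f x z := by
  have hmove (n : ℕ) : f (f^[n] x) ≠ f^[n] x := fun h ↦ hdiv ⟨f^[n] x, by
    refine tendsto_atTop_of_eventually_const (i₀ := n) fun m hm ↦ ?_
    obtain ⟨d, rfl⟩ := Nat.exists_eq_add_of_le' hm
    rw [Function.iterate_add_apply, Function.iterate_fixed h]⟩
  obtain ⟨m, hm⟩ : ∃ m, f^[m] x < f (f^[m] x) := by
    by_contra! hanti
    simp only [← Function.iterate_succ_apply'] at hanti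
    exact hdiv ⟨_, tendsto_atTop_iInf (antitone_nat_of_succ_le hanti)⟩
  obtain ⟨n, hn⟩ : ∃ n, f (f^[n] x) < f^[n] x := by
    by_contra! hmono
    simp only [← Function.iterate_succ_apply'] at hmono
    exact hdiv ⟨_, tendsto_atTop_iSup (monotone_nat_of_le_succ hmono)⟩
  let O := Set.range fun n ↦ f^[n] x
  let U := O ∩ {y | y < f y}
  let D := O ∩ {y | f y < y}
  have hU : sSup U ≤ f (sSup U) := closure_minimal (fun y (hy : y ∈ U) ↦ hy.2.le)
    (isClosed_le continuous_id hf) (csSup_mem_closure ⟨_, ⟨m, rfl⟩, hm⟩ (OrderTop.bddAbove _))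
  have hD : f (sInf D) ≤ sInf D := closure_minimal (fun y (hy : y ∈ D) ↦ hy.2.le)
    (isClosed_le hf continuous_id) (csInf_mem_closure ⟨_, ⟨n, rfl⟩, hn⟩ (OrderBot.bddBelow _))
  have hUD : sSup U ≤ sInf D := by
    refine sSup_le fun _ ⟨⟨m, hm⟩, hmU⟩ ↦ le_sInf fun _ ⟨⟨n, hn⟩, hnD⟩ ↦ ?_
    subst hm hn
    exact (hfree.iterate_lt_iterate hf hmU hnD).le
  obtain ⟨z, ⟨hUz, hzD⟩, hz⟩ := exists_mem_Icc_isFixedPt hf.continuousOn hUD hU hD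
  refine ⟨z, hz, fun n hn ↦ hmove n (by rw [hn, hz]), fun n hn ↦ ?_, fun n hn ↦ ?_⟩ <;>
    rw [Function.iterate_succ_apply']
  · refine (hmove n).lt_or_gt.resolve_left fun h ↦ hn.not_ge ?_
    exact hzD.trans (sInf_le ⟨⟨n, rfl⟩, h⟩)
  · refine (hmove n).lt_or_gt.resolve_right fun h ↦ hn.not_ge ?_
    exact (le_sSup (show f^[n] x ∈ U from ⟨⟨n, rfl⟩, h⟩)).trans hUz

theorem IsPivot.eventually_succ_lt_iff {z : X} (h : IsPivot f x z) (hf : Continuous f)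
    (hfree : HorseshoeFree f) (hdiv : ¬∃ l, Tendsto (fun n ↦ f^[n] x) atTop (𝓝 l)) :
    ∀ᶠ n in atTop, (f^[n + 1] x < z ↔ ¬ f^[n] x < z) := by
  have hlt : ∀ᶠ n in atTop, ¬(f^[n] x < z ∧ f^[n + 1] x < z) :=
    not_frequently.1 fun hlt ↦ hdiv ⟨_, h.tendsto_liminf_of_frequently_lt hf hfree hlt⟩
  have hgt : ∀ᶠ n in atTop, ¬(z < f^[n] x ∧ z < f^[n + 1] x) :=
    not_frequently.1 fun hgt ↦ hdiv
      ⟨_, IsPivot.tendsto_liminf_of_frequently_lt (X := Xᵒᵈ) h.dual hf hfree hgt⟩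
  filter_upwards [hlt, hgt] with n hlt hgt
  have := h.iterate_ne n
  have := h.iterate_ne (n + 1)
  grind

theorem exists_iterate_lt_iff_modEq (hfree : HorseshoeFree f) (hf : Continuous f)
    (hdiv : ¬∃ l, Tendsto (fun n ↦ f^[n] x) atTop (𝓝 l)) :
    ∃ z M, ∀ n ≥ M, ∀ m ≥ M, ((f^[n] x < z ↔ f^[m] x < z) ↔ n ≡ m [MOD 2]) := by
  obtain ⟨z, hz⟩ := exists_isPivot hfree hf hdiv
  obtain ⟨M, hM⟩ := eventually_atTop.1 (hz.eventually_succ_lt_iff hf hfree hdiv)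
  have hparity : ∀ n ≥ M, ((f^[n] x < z ↔ f^[M] x < z) ↔ n ≡ M [MOD 2]) := fun n hn ↦ by
    induction n, hn using Nat.le_induction with
    | base => exact iff_of_true Iff.rfl rfl
    | succ n hn ih =>
      have := hM n hn
      grind [Nat.ModEq]
  refine ⟨z, M, fun n hn m hm ↦ ?_⟩
  have hn := hparity n hn
  have hm := hparity m hm
  grind [Nat.ModEq]

end Alternation

section Unlinked

/-- The union of the intervals spanned by pairs of terms of the sequence `x` whose indices are at
least `M` and lie in the residue class `c` modulo `q`. -/
def residueHull {X : Type*} [Lattice X] (x : ℕ → X) (q M : ℕ) (c : ZMod q) : Set X :=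
  {p | ∃ n ≥ M, ∃ m ≥ M, (n : ZMod q) = c ∧ (m : ZMod q) = c ∧ p ∈ Set.uIcc (x n) (x m)}

/-- The sequence `x` is eventually unlinked modulo `q` if, after discarding finitely many terms,
its subsequences along the different residue classes modulo `q` span disjoint intervals. -/
def EventuallyUnlinked {X : Type*} [Lattice X] (x : ℕ → X) (q : ℕ) : Prop :=
  ∃ M, Pairwise (Function.onFun Disjoint (residueHull x q M))

theorem lt_iff_lt_of_mem_uIcc {X : Type*} [LinearOrder X] {u v z p : X} (h : u < z ↔ v < z)
    (hp : p ∈ Set.uIcc u v) : p < z ↔ u < z := by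
  rcases Set.mem_uIcc.1 hp with ⟨h₁, h₂⟩ | ⟨h₁, h₂⟩ <;> grind

theorem EventuallyUnlinked.mul_two {X : Type*} [LinearOrder X] {x : ℕ → X} {q : ℕ} [NeZero q]
    (h : EventuallyUnlinked x q)
    (hside : ∀ r : ZMod q, ∃ z, ∃ M : ℕ, ∀ n ≥ M, ∀ m ≥ M, (n : ZMod q) = r → (m : ZMod q) = r →
      ((x n < z ↔ x m < z) ↔ (n : ZMod (q * 2)) = m)) :
    EventuallyUnlinked x (q * 2) := by
  obtain ⟨M₀, hM₀⟩ := h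
  choose z M hM using hside
  have hmod {n m : ℕ} (h : (n : ZMod (q * 2)) = m) : (n : ZMod q) = m := by
    rw [ZMod.natCast_eq_natCast_iff] at h ⊢
    exact h.of_mul_right 2
  refine ⟨M₀ ⊔ Finset.univ.sup M, fun c c' hcc' ↦ Set.disjoint_left.2 ?_⟩
  rintro p ⟨n, hn, m, hm, rfl, hnm, hp⟩ ⟨n', hn', m', hm', rfl, hnm', hp'⟩
  simp only [ge_iff_le, sup_le_iff] at hn hm hn' hm'
  have hnn' : (n : ZMod q) = n' := by
    by_contra hne
    exact (hM₀ hne).notMem_of_mem_left ⟨n, hn.1, m, hm.1, rfl, hmod hnm, hp⟩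
      ⟨n', hn'.1, m', hm'.1, rfl, hmod hnm', hp'⟩
  have hMr : M n ≤ Finset.univ.sup M := Finset.le_sup (Finset.mem_univ _)
  have hr := hM n
  have hside := (hr n (hMr.trans hn.2) m (hMr.trans hm.2) rfl (hmod hnm)).2 hnm.symm
  have hside' := (hr n' (hMr.trans hn'.2) m' (hMr.trans hm'.2) hnn'.symm
    ((hmod hnm').trans hnn'.symm)).2 hnm'.symm
  refine hcc' ((hr n (hMr.trans hn.2) n' (hMr.trans hn'.2) rfl hnn'.symm).1 ?_)
  rw [← lt_iff_lt_of_mem_uIcc hside hp, lt_iff_lt_of_mem_uIcc hside' hp']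

theorem tendsto_iterate_mul_of_tendsto_iterate_add_mul {X : Type*} [TopologicalSpace X]
    {f : X → X} (hf : Continuous f) {x l : X} {q : ℕ} (hq : q ≠ 0) (r : ℕ)
    (h : Tendsto (fun n ↦ f^[r + n * q] x) atTop (𝓝 l)) :
    Tendsto (fun n ↦ f^[n * q] x) atTop (𝓝 (f^[r * q - r] l)) := by
  have hr : r ≤ r * q := Nat.le_mul_of_pos_right r (Nat.pos_of_ne_zero hq)
  refine (tendsto_add_atTop_iff_nat r).1 ((((hf.iterate _).tendsto l).comp h).congr fun n ↦ ?_)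
  rw [Function.comp_apply, ← Function.iterate_add_apply, add_mul, ← add_assoc,
    Nat.sub_add_cancel hr, add_comm]

section Orbit

variable {X : Type*} [CompleteLinearOrder X] [DenselyOrdered X] [TopologicalSpace X]
  [OrderTopology X] {f : X → X} {x : X}

theorem exists_iterate_lt_iff_natCast_eq (hfree : HorseshoeFree f) (hf : Continuous f) {q : ℕ}
    (hq : q ≠ 0) (hdiv : ¬∃ l, Tendsto (fun n ↦ f^[n * q] x) atTop (𝓝 l)) (r : ZMod q) :
    ∃ z, ∃ M : ℕ, ∀ n ≥ M, ∀ m ≥ M, (n : ZMod q) = r → (m : ZMod q) = r →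
      ((f^[n] x < z ↔ f^[m] x < z) ↔ (n : ZMod (q * 2)) = m) := by
  have hiter (n : ℕ) : (f^[q])^[n] (f^[r.val] x) = f^[r.val + n * q] x := by
    rw [← Function.iterate_mul, ← Function.iterate_add_apply, add_comm, mul_comm]
  obtain ⟨z, M, hM⟩ := exists_iterate_lt_iff_modEq (x := f^[r.val] x) (hfree.iterate hq)
    (hf.iterate q) fun ⟨l, hl⟩ ↦ hdiv ⟨_, tendsto_iterate_mul_of_tendsto_iterate_add_mul hf hq
      r.val (by simpa only [hiter] using hl)⟩
  refine ⟨z, M * q, fun n hn m hm hnr hmr ↦ ?_⟩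
  have hdecomp {n : ℕ} (hnr : (n : ZMod q) = r) : r.val + n / q * q = n := by
    rw [← hnr, ZMod.val_natCast, Nat.mod_add_div']
  have hge {n : ℕ} (hn : M * q ≤ n) : M ≤ n / q :=
    (Nat.le_div_iff_mul_le (Nat.pos_of_ne_zero hq)).2 hn
  have := hM _ (hge hn) _ (hge hm)
  rw [hiter, hiter, hdecomp hnr, hdecomp hmr] at this
  rw [this, ZMod.natCast_eq_natCast_iff, ← Nat.ModEq.mul_right_cancel_iff' hq, mul_comm 2,
    ← Nat.ModEq.add_iff_left (Nat.ModEq.refl r.val), hdecomp hnr, hdecomp hmr]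

theorem eventuallyUnlinked_two_pow (hfree : HorseshoeFree f) (hf : Continuous f)
    (hdiv : ∀ k : ℕ, ¬∃ l, Tendsto (fun n ↦ f^[n * 2 ^ k] x) atTop (𝓝 l)) (k : ℕ) :
    EventuallyUnlinked (fun n ↦ f^[n] x) (2 ^ k) := by
  induction k with
  | zero => exact ⟨0, fun c c' h ↦ (h (Subsingleton.elim (α := ZMod 1) c c')).elim⟩
  | succ k ih => exact ih.mul_two (exists_iterate_lt_iff_natCast_eq hfree hf (NeZero.ne _) (hdiv k))

end Orbit

end Unlinked

section OrderCompact

theorem sInf_mem_uIcc_or_sSup_mem_uIcc {X : Type*} [CompleteLinearOrder X] {s : Set X}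
    (hs : s.OrdConnected) {u v : X} (hu : u ∈ s) (hv : v ∉ s) :
    sInf s ∈ Set.uIcc u v ∨ sSup s ∈ Set.uIcc u v := by
  rcases le_total u v with huv | hvu
  · refine .inr (Set.mem_uIcc_of_le (le_sSup hu) (sSup_le fun w hw ↦ ?_))
    exact le_of_not_ge fun hvw ↦ hv (hs.out hu hw ⟨huv, hvw⟩)
  · refine .inl (Set.mem_uIcc_of_ge (le_sInf fun w hw ↦ ?_) (sInf_le hu))
    exact le_of_not_ge fun hwv ↦ hv (hs.out hw hu ⟨hwv, hvu⟩)

theorem exists_finset_forall_disjoint_dist_lt {X Y : Type*} [CompleteLinearOrder X]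
    [TopologicalSpace X] [OrderTopology X] [PseudoMetricSpace Y] {f : X → Y} (hf : Continuous f)
    {ε : ℝ} (hε : 0 < ε) :
    ∃ P : Finset X, ∀ u v, Disjoint (Set.uIcc u v) P → dist (f u) (f v) < ε := by
  classical
  let C (y : X) : Set X := Set.ordConnectedComponent (f ⁻¹' Metric.ball (f y) (ε / 2)) y
  have hC (y : X) : C y ∈ 𝓝 y := Set.ordConnectedComponent_mem_nhds.2
    (hf.continuousAt.preimage_mem_nhds (Metric.ball_mem_nhds _ (half_pos hε)))
  obtain ⟨t, -, ht⟩ := isCompact_univ.elim_nhds_subcover C fun y _ ↦ hC y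
  refine ⟨t.image (fun y ↦ sInf (C y)) ∪ t.image (fun y ↦ sSup (C y)), fun u v huv ↦ ?_⟩
  obtain ⟨y, hy, hu⟩ : ∃ y ∈ t, u ∈ C y := by simpa using ht (Set.mem_univ u)
  have hv : v ∈ C y := by
    by_contra hv
    rcases sInf_mem_uIcc_or_sSup_mem_uIcc inferInstance hu hv with h | h
    · exact huv.notMem_of_mem_left h (by simpa using .inl ⟨y, hy, rfl⟩)
    · exact huv.notMem_of_mem_left h (by simpa using .inr ⟨y, hy, rfl⟩)
  have hball : C y ⊆ f ⁻¹' Metric.ball (f y) (ε / 2) := Set.ordConnectedComponent_subset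
  exact (dist_triangle_right _ _ (f y)).trans_lt
    ((add_lt_add (hball hu) (hball hv)).trans_eq (add_halves ε))

end OrderCompact

section AlmostPeriodic

theorem card_filter_not_disjoint_le {ι X : Type*} [Fintype ι] {s : ι → Set X}
    (hs : Pairwise (Function.onFun Disjoint s)) (P : Finset X)
    [DecidablePred fun i ↦ ¬Disjoint (s i) P] :
    (Finset.univ.filter fun i ↦ ¬Disjoint (s i) P).card ≤ P.card := by
  refine Finset.card_le_card_of_forall_subsingleton (fun i p ↦ p ∈ s i) (fun i hi ↦ ?_) ?_
  · obtain ⟨p, hp, hpP⟩ := Set.not_disjoint_iff.1 (Finset.mem_filter.1 hi).2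
    exact ⟨p, hpP, hp⟩
  · rintro p - i ⟨-, hi⟩ j ⟨-, hj⟩
    by_contra hij
    exact (hs hij).notMem_of_mem_left hi hj

variable {X E : Type*} [CompleteLinearOrder X] [TopologicalSpace X] [OrderTopology X]
  [SeminormedAddCommGroup E] {g : X → E}

theorem rationallyAlmostPeriodic_of_frequently_eventuallyUnlinked {x : ℕ → X}
    (hx : ∃ᶠ q in atTop, EventuallyUnlinked x q) (hg : Continuous g) :
    RationallyAlmostPeriodic fun n ↦ g (x n) := by
  classical
  refine .of_dist_le ((isCompact_range hg).isBounded.subset ?_) fun ε hε ↦ ?_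
  · exact Set.range_comp_subset_range x g
  obtain ⟨P, hP⟩ := exists_finset_forall_disjoint_dist_lt hg hε
  obtain ⟨q, ⟨M, hM⟩, hq, hPq⟩ := (hx.and_eventually ((eventually_ne_atTop 0).and
    (tendsto_natCast_atTop_atTop.eventually_ge_atTop (P.card / ε)))).exists
  have : NeZero q := ⟨hq⟩
  refine ⟨q, hq, M, Finset.univ.filter fun c ↦ ¬Disjoint (residueHull x q M c) P, ?_, ?_⟩
  · rw [div_le_iff₀' hε] at hPq
    exact (Nat.cast_le.2 (card_filter_not_disjoint_le hM P)).trans hPq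
  · intro n hn m hm hnm hgood
    simp only [Finset.mem_filter, Finset.mem_univ, true_and, not_not] at hgood
    have hsub : Set.uIcc (x n) (x m) ⊆ residueHull x q M n :=
      fun p hp ↦ ⟨n, hn, m, hm, rfl, hnm.symm, hp⟩
    exact (hP _ _ (hgood.mono_left hsub)).le

end AlmostPeriodic

section Cycle

theorem RationallyAlmostPeriodic.of_tendsto_sub {E : Type*} [SeminormedAddCommGroup E] {a : ℕ → E}
    {q : ℕ} (hq : q ≠ 0) {c : ZMod q → E} (h : Tendsto (fun n ↦ a n - c n) atTop (𝓝 0)) :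
    RationallyAlmostPeriodic a := by
  refine fun ε hε ↦ ⟨q, hq, c, ?_⟩
  have hmean := ((tendsto_add_atTop_iff_nat 1).2 h.norm).cesaro
  rw [norm_zero] at hmean
  filter_upwards [hmean.eventually_lt_const hε, eventually_gt_atTop 0] with N hN hN0
  rw [inv_mul_lt_iff₀ (Nat.cast_pos.2 hN0), mul_comm, Finset.range_eq_Ico,
    Finset.sum_Ico_add' (fun n : ℕ ↦ ‖a n - c n‖), zero_add] at hN
  exact hN.le

theorem tendsto_sub_natCast_zmod {E : Type*} [SeminormedAddCommGroup E] {a : ℕ → E} {q : ℕ}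
    [NeZero q] {c : ZMod q → E}
    (h : ∀ r : ZMod q, Tendsto (fun n ↦ a (r.val + n * q)) atTop (𝓝 (c r))) :
    Tendsto (fun n ↦ a n - c n) atTop (𝓝 0) := by
  refine Metric.tendsto_nhds.2 fun ε hε ↦ eventually_atTop_of_add_mul (NeZero.ne q) fun r hr ↦ ?_
  simpa [dist_eq_norm, ZMod.val_natCast_of_lt hr] using Metric.tendsto_nhds.1 (h r) ε hε

theorem rationallyAlmostPeriodic_of_tendsto_iterate_mul {X E : Type*} [TopologicalSpace X]
    [SeminormedAddCommGroup E] {f : X → X} (hf : Continuous f) {g : X → E} (hg : Continuous g)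
    {x l : X} {q : ℕ} (hq : q ≠ 0) (h : Tendsto (fun n ↦ f^[n * q] x) atTop (𝓝 l)) :
    RationallyAlmostPeriodic fun n ↦ g (f^[n] x) := by
  have : NeZero q := ⟨hq⟩
  let c (r : ZMod q) : E := g (f^[r.val] l)
  have hc (r : ZMod q) : Tendsto (fun n ↦ g (f^[r.val + n * q] x)) atTop (𝓝 (c r)) :=
    (hg.tendsto _).comp (tendsto_iterate_add_mul hf h r.val)
  exact .of_tendsto_sub hq (tendsto_sub_natCast_zmod (a := fun n ↦ g (f^[n] x)) hc)

end Cycle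

theorem HorseshoeFree.rationallyAlmostPeriodic {X E : Type*} [CompleteLinearOrder X]
    [DenselyOrdered X] [TopologicalSpace X] [OrderTopology X] [SeminormedAddCommGroup E]
    {f : X → X} (hfree : HorseshoeFree f) (hf : Continuous f) {g : X → E} (hg : Continuous g)
    (x : X) : RationallyAlmostPeriodic fun n ↦ g (f^[n] x) := by
  by_cases hconv : ∃ (k : ℕ) (l : X), Tendsto (fun n ↦ f^[n * 2 ^ k] x) atTop (𝓝 l)
  · obtain ⟨k, l, hl⟩ := hconv
    exact rationallyAlmostPeriodic_of_tendsto_iterate_mul hf hg (NeZero.ne _) hl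
  · have hunlinked := eventuallyUnlinked_two_pow hfree hf (not_exists.1 hconv)
    exact rationallyAlmostPeriodic_of_frequently_eventuallyUnlinked
      ((tendsto_pow_atTop_atTop_of_one_lt one_lt_two).frequently (.of_forall hunlinked)) hg

theorem zero_entropy_interval_map_mobius_orthogonal_general {X E : Type*} [CompleteLinearOrder X]
    [DenselyOrdered X] [UniformSpace X] [OrderTopology X] [SeminormedAddCommGroup E]
    [NormedSpace ℝ E] {T : X → X} (hT : Continuous T)
    (hent : Dynamics.coverEntropy T Set.univ = 0) {f : X → E} (hf : Continuous f) (x : X) :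
    HasMeanZero fun n ↦ ArithmeticFunction.moebius n • f (T^[n] x) :=
  ((horseshoeFree_of_coverEntropy_eq_zero hent).rationallyAlmostPeriodic hT hf
    x).hasMeanZero_moebius_smul

/-- Every continuous map `T : [0,1] → [0,1]` with zero topological entropy is Möbius
orthogonal. -/
theorem zero_entropy_interval_map_mobius_orthogonal
    (T : I → I) (hT : Continuous T)
    (hent : Dynamics.coverEntropy T Set.univ = 0) :
    ∀ (f : C(I, ℂ)) (x : I),
      Tendsto
        (fun N : ℕ => (1 / (N : ℂ)) *
          ∑ n ∈ Finset.Icc 1 N, f (T^[n] x) * (ArithmeticFunction.moebius n : ℂ))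
        atTop (nhds 0) := by
  intro f x
  have hmean := zero_entropy_interval_map_mobius_orthogonal_general hT hent f.continuous x
  exact Tendsto.congr (fun N ↦ by simp [mul_comm]) hmean
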